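/- arXiv:math/0508172 — 6 statements merged into one kernel-verified Lean document; each statement's English description precedes it below -/
import Mathlib

section
/- Let X be a Peano continuum without cut points which admits no essential map to the circle. Let a group G act on X by homeomorphisms and let 𝓐 be a G-invariant collection of connected closed subsets of X such that: (i) 𝓐 is null; (ii) 𝓐 is fine; (iii) for each A ∈ 𝓐 the stabilizer st(A) = {g ∈ G : g(A) = A} acts as a convergence group on A. Then G acts as a convergence group on X. -/
/-!
A member of `𝓐` is called nondegenerate if it has at least two points.

**Shields.** As every map to the circle is inessential, `X` is unicoherent: if two closed
connected sets cover `X`, their intersection is connected, for otherwise an Urysohn function gluing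
`exp (iπu)` to `exp (-iπu)` would be an essential map (`isPreconnected_inter_of_circle`). Let `Y` be
connected with `p ∉ closure Y`. Fineness and nullness give finitely many members of `𝓐` cutting `p`
off from a small sphere. By unicoherence the part of the resulting frontier that faces `Y` is
connected, and it is nondegenerate because `X` has no cut points. Hence the nondegenerate members
meeting it form a finite shield: its union separates `p` from `Y`, misses both, and its members
are linked by successive intersections (`exists_shield`).

**Dynamics.** Let `h i` be group elements such that every member of a shield between `p` and `Y`
shrinks to one point `q` under `h i`. Then points `x i → p` and `y i ∈ Y` cannot have images
converging to two points different from `q`: since `q` is not a cut point, a connected set away from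
`q` joins the images, and its preimage under `h i` would join `p` to `Y` inside the complement of
the shield (`Shield.not_pulled_apart`).

Given distinct `g i`, nullness and compactness allow passing to a subsequence for which every
nondegenerate member is eventually sent to one fixed set or shrinks to a point, under both `g i`
and its inverse (`exists_dichotomous_subseq`).

* If no member is eventually sent to a fixed set, shields show that under the inverses all members
  shrink to a common point `q`, and then that `q` is a repeller
  (`exists_convSeqOn_of_shrinking`).
* If `g i • A = B` eventually, the convergence action of the stabilizer of `A` provides `n ∈ A` and
  `p ∈ B` such that `g i` converges to `p` on `A` away from `n`. A shield around `n` meets the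
  connected set `A`, so it shrinks to `p` by linkedness, and the same argument shows that `n` and
  `p` are the repeller and attractor on all of `X` (`exists_convSeqOn_of_stable`).
-/

open Set Filter Topology Pointwise

/-- The set `E` separates the points `x` and `y`: both lie outside `E` and in
different connected components of the complement of `E`. -/
def SepPts {X : Type*} [TopologicalSpace X] (E : Set X) (x y : X) : Prop :=
  x ∉ E ∧ y ∉ E ∧ connectedComponentIn Eᶜ x ≠ connectedComponentIn Eᶜ y

/-- The set `E` separates the set `Y ⊆ X \ E`: two points of `Y` lie in different
connected components of the complement of `E`. -/
def SepSet {X : Type*} [TopologicalSpace X] (E Y : Set X) : Prop :=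
  Y ⊆ Eᶜ ∧ ∃ x ∈ Y, ∃ y ∈ Y, connectedComponentIn Eᶜ x ≠ connectedComponentIn Eᶜ y

/-- Two (closed) sets `A` and `B` cross: they intersect, or each separates the other. -/
def Crosses {X : Type*} [TopologicalSpace X] (A B : Set X) : Prop :=
  (A ∩ B).Nonempty ∨ (SepSet A B ∧ SepSet B A)

/-- There is a (finite) crossing sequence in `𝓐` from `A` to `B`. -/
def CrossSeqFromTo {X : Type*} [TopologicalSpace X] (𝓐 : Set (Set X)) (A B : Set X) : Prop :=
  ∃ (n : ℕ) (c : ℕ → Set X), c 0 = A ∧ c n = B ∧ (∀ i ≤ n, c i ∈ 𝓐) ∧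
    ∀ i < n, Crosses (c i) (c (i + 1))

/-- A collection `𝓐` is cross-connected: any two of its elements are joined by a
crossing sequence in `𝓐`. -/
def CrossConnected {X : Type*} [TopologicalSpace X] (𝓐 : Set (Set X)) : Prop :=
  ∀ A ∈ 𝓐, ∀ B ∈ 𝓐, CrossSeqFromTo 𝓐 A B

/-- There is a crossing sequence `A, A_1, …, A_n, B` in `𝓐` (with `n ≥ 1`) whose
intermediate terms `A_1, …, A_n` are disjoint from `D`. -/
def CrossSeqAvoiding {X : Type*} [TopologicalSpace X] (𝓐 : Set (Set X)) (A B D : Set X) :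
    Prop :=
  ∃ n : ℕ, 1 ≤ n ∧ ∃ c : ℕ → Set X, c 0 = A ∧ c (n + 1) = B ∧ (∀ i ≤ n + 1, c i ∈ 𝓐) ∧
    (∀ i ≤ n, Crosses (c i) (c (i + 1))) ∧ ∀ i, 1 ≤ i → i ≤ n → c i ∩ D = ∅

/-- A collection of subsets of a metric space is null if for every `ε > 0` only finitely
many of its members have diameter greater than `ε`. -/
def NullFam {X : Type*} [PseudoMetricSpace X] (𝓐 : Set (Set X)) : Prop :=
  ∀ ε : ℝ, 0 < ε → {A ∈ 𝓐 | ε < Metric.diam A}.Finite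

/-- A collection `𝓐` is fine if any two distinct points are separated by the union of
some finite subcollection of `𝓐`. -/
def FineFam {X : Type*} [PseudoMetricSpace X] (𝓐 : Set (Set X)) : Prop :=
  ∀ x y : X, x ≠ y → ∃ 𝓑 ⊆ 𝓐, 𝓑.Finite ∧ SepPts (⋃₀ 𝓑) x y

/-- A sequence of maps `T i : X → X` acts as a convergence sequence on the subset `A`,
with repeller `n ∈ A` and attractor `p ∈ A`: for every compact `C ⊆ A \ {n}` and every
open neighborhood `U` of `p`, eventually `T i '' C ⊆ U`. -/
def ConvSeqOn {X : Type*} [TopologicalSpace X] (A : Set X) (T : ℕ → X → X) (n p : X) :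
    Prop :=
  n ∈ A ∧ p ∈ A ∧ ∀ C : Set X, C ⊆ A → IsCompact C → n ∉ C →
    ∀ U : Set X, IsOpen U → p ∈ U → ∀ᶠ i in atTop, T i '' C ⊆ U

/-- The stabilizer of a subset `A ⊆ X` in `G`. -/
def stab (G : Type*) {X : Type*} [Group G] [MulAction G X] (A : Set X) : Set G :=
  {g : G | g • A = A}

/-- The subset `S` of the group `G` acts as a convergence group on `A ⊆ X`: every
sequence of distinct elements of `S` has a subsequence acting as a convergence
sequence on `A`. -/
def ConvGroupOn {G X : Type*} [Group G] [MulAction G X] [TopologicalSpace X]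
    (S : Set G) (A : Set X) : Prop :=
  ∀ g : ℕ → G, (∀ i, g i ∈ S) → Function.Injective g →
    ∃ k : ℕ → ℕ, StrictMono k ∧ ∃ n p : X,
      ConvSeqOn A (fun i => (g (k i) • · : X → X)) n p

/-- `(G, 𝓐)` is a local convergence pairing on `X`. -/
structure IsLocalConvPairing (G : Type*) {X : Type*} [Group G] [MulAction G X]
    [MetricSpace X] (𝓐 : Set (Set X)) : Prop where
  closed : ∀ A ∈ 𝓐, IsClosed A
  invariant : ∀ g : G, ∀ A ∈ 𝓐, g • A ∈ 𝓐
  big : ∀ A ∈ 𝓐, 2 < A.encard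
  null : NullFam 𝓐
  fine : FineFam 𝓐
  stabConv : ∀ A ∈ 𝓐, ConvGroupOn (stab G A) A
  connect : ∀ A ∈ 𝓐, ∀ B ∈ 𝓐, (A ∩ B).encard ≤ 2 →
    (∀ c : X, A ∩ B = {c} → ∀ b ∈ B, b ≠ c → CrossSeqAvoiding 𝓐 A B {b, c}) ∧
    ((¬ ∃ c : X, A ∩ B = {c}) → CrossSeqAvoiding 𝓐 A B (A ∩ B))

/-! ### Unicoherence and connected neighbourhoods -/

/-- A nullhomotopic map to the circle lifts through the covering `ℝ → S¹`. -/
theorem exists_lift_of_nullhomotopic {X : Type*} [TopologicalSpace X]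
    (f : C(X, Circle)) (hf : f.Nullhomotopic) :
    ∃ φ : C(X, ℝ), ∀ x, Circle.exp (φ x) = f x := by
  obtain ⟨y, hy⟩ := hf
  obtain ⟨H⟩ := hy.symm
  have ht := Circle.exp_arg y
  set t := Complex.arg y
  have cov : IsCoveringMap (Circle.exp : ℝ → Circle) :=
    Circle.isAddQuotientCoveringMap_exp.isCoveringMap
  let L := cov.liftHomotopy H.toContinuousMap (ContinuousMap.const X t) (by
    intro a; simp [ht])
  have hL := cov.liftHomotopy_lifts H.toContinuousMap (ContinuousMap.const X t) (by
    intro a; simp [ht])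
  refine ⟨L.comp ⟨fun x => (1, x), by fun_prop⟩, fun x => ?_⟩
  change Circle.exp (L (1, x)) = f x
  exact (congrFun hL (1, x)).trans (H.apply_one x)

/-- Two lifts of the same map differ by a constant on a connected set, stated for the difference
`ψ` of the lifts. -/
theorem eq_of_continuousOn_exp_eq_one {X : Type*} [TopologicalSpace X] {M : Set X}
    (hM : IsPreconnected M) {ψ : X → ℝ} (hψ : ContinuousOn ψ M)
    (h : ∀ x ∈ M, Circle.exp (ψ x) = 1) : ∀ x ∈ M, ∀ y ∈ M, ψ x = ψ y := by
  intro x hx y hy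
  have hc := hM.image ψ hψ
  by_contra hne
  have hsub : ψ '' M ⊆ range (fun k : ℤ => (k : ℝ) * (2 * Real.pi)) := by
    rintro _ ⟨z, hz, rfl⟩
    obtain ⟨k, hk⟩ := Circle.exp_eq_one.1 (h z hz)
    exact ⟨k, hk.symm⟩
  have hcount : (ψ '' M).Countable := (countable_range _).mono hsub
  exact hne (hcount.isTotallyDisconnected _ subset_rfl hc ⟨x, hx, rfl⟩ ⟨y, hy, rfl⟩)

/-- Unicoherence. A separation `t, t'` of `M ∩ N` would give a map to the circle which has winding
number one, being `exp (iπu)` on `M` and `exp (-iπu)` on `N` for an Urysohn function `u`. -/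
theorem isPreconnected_inter_of_circle {X : Type*} [MetricSpace X]
    (hcirc : ∀ f : C(X, Circle), f.Nullhomotopic) {M N : Set X}
    (hM : IsClosed M) (hN : IsClosed N) (cM : IsPreconnected M) (cN : IsPreconnected N)
    (hMN : M ∪ N = univ) : IsPreconnected (M ∩ N) := by
  classical
  rw [isPreconnected_closed_iff]
  intro t t' ht ht' hcov ⟨a, ha, hat⟩ ⟨b, hb, hbt⟩
  by_contra hemp
  have hdisj : Disjoint (M ∩ N ∩ t) (M ∩ N ∩ t') := by
    rw [Set.disjoint_left]
    intro x hx hx'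
    exact hemp ⟨x, hx.1, hx.2, hx'.2⟩
  obtain ⟨u, hu0, hu1, -⟩ := exists_continuous_zero_one_of_isClosed
    ((hM.inter hN).inter ht) ((hM.inter hN).inter ht') hdisj
  let F : X → Circle := fun x => if x ∈ M then Circle.exp (Real.pi * u x)
    else Circle.exp (-(Real.pi * u x))
  have hFM : ∀ x ∈ M, F x = Circle.exp (Real.pi * u x) := fun x hx => if_pos hx
  have hFN : ∀ x ∈ N, F x = Circle.exp (-(Real.pi * u x)) := by
    intro x hx
    by_cases hxM : x ∈ M
    · rw [hFM x hxM]
      rcases hcov ⟨hxM, hx⟩ with h | h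
      · have := hu0 ⟨⟨hxM, hx⟩, h⟩
        simp at this
        simp [this]
      · have := hu1 ⟨⟨hxM, hx⟩, h⟩
        simp at this
        simp only [this, mul_one]
        rw [Circle.exp_eq_exp]
        exact ⟨1, by push_cast; ring⟩
    · exact if_neg hxM
  have hFc : Continuous F := by
    rw [← continuousOn_univ, ← hMN]
    refine ContinuousOn.union_of_isClosed ?_ ?_ hM hN
    · exact (Continuous.continuousOn (by fun_prop)).congr hFM
    · exact (Continuous.continuousOn (by fun_prop)).congr hFN
  obtain ⟨φ, hφ⟩ := exists_lift_of_nullhomotopic ⟨F, hFc⟩ (hcirc _)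
  have h1 := eq_of_continuousOn_exp_eq_one cM (ψ := fun x => φ x - Real.pi * u x)
    (Continuous.continuousOn (by fun_prop)) (by
      intro x hx
      rw [Circle.exp_sub, hφ x]
      simp [hFM x hx]) a ha.1 b hb.1
  have h2 := eq_of_continuousOn_exp_eq_one cN (ψ := fun x => φ x + Real.pi * u x)
    (Continuous.continuousOn (by fun_prop)) (by
      intro x hx
      rw [Circle.exp_add, hφ x]
      simp [hFN x hx, Circle.exp_neg]) a ha.2 b hb.2
  have ha0 : u a = 0 := hu0 ⟨ha, hat⟩
  have hb1 : u b = 1 := hu1 ⟨hb, hbt⟩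
  simp only [ha0, hb1] at h1 h2
  have := Real.pi_pos
  linarith

theorem frontier_connectedComponentIn_subset {X : Type*} [TopologicalSpace X]
    [LocallyConnectedSpace X] {F : Set X} (hF : IsClosed F) (x : X) :
    frontier (connectedComponentIn Fᶜ x) ⊆ F := by
  intro y hy
  by_contra hyF
  have hopen : IsOpen (connectedComponentIn Fᶜ x) := hF.isOpen_compl.connectedComponentIn
  have h1 : connectedComponentIn Fᶜ y ∈ 𝓝 y :=
    hF.isOpen_compl.connectedComponentIn.mem_nhds (mem_connectedComponentIn hyF)
  rw [hopen.frontier_eq] at hy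
  obtain ⟨z, hz, hz'⟩ := mem_closure_iff_nhds.1 hy.1 _ h1
  apply hy.2
  rw [connectedComponentIn_eq hz', ← connectedComponentIn_eq hz]
  exact mem_connectedComponentIn hyF

/-- The complement of a component of `Kᶜ` is the union of `K` and the other components, each of
whose closures meets `K`. -/
theorem isPreconnected_compl_component {X : Type*} [TopologicalSpace X] [ConnectedSpace X]
    [LocallyConnectedSpace X] {K : Set X} (hK : IsClosed K) (cK : IsPreconnected K)
    (hne : K.Nonempty) (y : X) : IsPreconnected (connectedComponentIn Kᶜ y)ᶜ := by
  obtain ⟨k, hk⟩ := hne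
  have hkk : k ∈ (connectedComponentIn Kᶜ y)ᶜ := fun h => connectedComponentIn_subset _ _ h hk
  have hKsub : K ⊆ (connectedComponentIn Kᶜ y)ᶜ :=
    fun z hz h => connectedComponentIn_subset _ _ h hz
  refine isPreconnected_of_forall k ?_
  intro x hx
  by_cases hxK : x ∈ K
  · exact ⟨K, hKsub, hk, hxK, cK⟩
  have hCo : IsOpen (connectedComponentIn Kᶜ x) := hK.isOpen_compl.connectedComponentIn
  have hYo : IsOpen (connectedComponentIn Kᶜ y) := hK.isOpen_compl.connectedComponentIn
  have hxC : x ∈ connectedComponentIn Kᶜ x := mem_connectedComponentIn hxK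
  have hfr : (frontier (connectedComponentIn Kᶜ x)).Nonempty := by
    rw [nonempty_frontier_iff]
    exact ⟨⟨x, hxC⟩, fun h => connectedComponentIn_subset Kᶜ x (h ▸ mem_univ k) hk⟩
  obtain ⟨z, hz⟩ := hfr
  refine ⟨K ∪ closure (connectedComponentIn Kᶜ x), union_subset hKsub ?_, Or.inl hk,
    Or.inr (subset_closure hxC), ?_⟩
  · refine closure_minimal ?_ hYo.isClosed_compl
    intro w hw hw'
    apply hx
    rw [connectedComponentIn_eq hw', ← connectedComponentIn_eq hw]
    exact hxC
  · exact cK.union z (frontier_connectedComponentIn_subset hK x hz) (frontier_subset_closure hz)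
      isPreconnected_connectedComponentIn.closure

/-- By unicoherence, a complementary component of a closed connected set has connected frontier:
the frontier is the intersection of the closure of the component with its complement. -/
theorem isPreconnected_frontier_component {X : Type*} [MetricSpace X] [ConnectedSpace X]
    [LocallyConnectedSpace X] (hcirc : ∀ f : C(X, Circle), f.Nullhomotopic)
    {K : Set X} (hK : IsClosed K) (cK : IsPreconnected K)
    (hne : K.Nonempty) (y : X) : IsPreconnected (frontier (connectedComponentIn Kᶜ y)) := by
  have hYo : IsOpen (connectedComponentIn Kᶜ y) := hK.isOpen_compl.connectedComponentIn
  rw [hYo.frontier_eq, sdiff_eq]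
  refine isPreconnected_inter_of_circle hcirc isClosed_closure hYo.isClosed_compl
    isPreconnected_connectedComponentIn.closure (isPreconnected_compl_component hK cK hne y) ?_
  rw [← univ_subset_iff]
  intro x _
  by_cases hx : x ∈ connectedComponentIn Kᶜ y
  · exact Or.inl (subset_closure hx)
  · exact Or.inr hx

theorem exists_preconnected_nhd {X : Type*} [MetricSpace X] [LocallyConnectedSpace X]
    {c : X} {F : Set X} (hF : IsClosed F) (hc : c ∉ F) :
    ∃ V, IsOpen V ∧ IsPreconnected V ∧ c ∈ V ∧ Disjoint (closure V) F := by
  obtain ⟨W, hW, hWo, hd⟩ : ∃ W : Set X, c ∈ W ∧ IsOpen W ∧ Disjoint (closure W) F := by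
    obtain ⟨t, ht, htc, hts⟩ := exists_mem_nhds_isClosed_subset (hF.isOpen_compl.mem_nhds hc)
    refine ⟨interior t, mem_interior_iff_mem_nhds.2 ht, isOpen_interior, ?_⟩
    rw [← subset_compl_iff_disjoint_right]
    exact (closure_minimal interior_subset htc).trans hts
  exact ⟨connectedComponentIn W c, hWo.connectedComponentIn, isPreconnected_connectedComponentIn,
    mem_connectedComponentIn hW, hd.mono_left (closure_mono (connectedComponentIn_subset _ _))⟩

/-- As `p` is not a cut point, any two other points lie in the interior of a connected set that
stays away from `p`. -/
theorem exists_join_away {X : Type*} [MetricSpace X] [LocallyConnectedSpace X]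
    (hcut : ∀ x : X, IsPreconnected ({x}ᶜ : Set X)) {p c d : X} (hc : c ≠ p) (hd : d ≠ p) :
    ∃ R : Set X, IsPreconnected R ∧ R ∈ 𝓝 c ∧ R ∈ 𝓝 d ∧ p ∉ closure R := by
  let S : Set X := {d | ∃ R : Set X, IsPreconnected R ∧ R ∈ 𝓝 c ∧ R ∈ 𝓝 d ∧ p ∉ closure R}
  have key : ∀ e, e ≠ p → ∃ V, IsOpen V ∧ IsPreconnected V ∧ e ∈ V ∧ p ∉ closure V := by
    intro e he
    obtain ⟨V, h1, h2, h3, h4⟩ := exists_preconnected_nhd (isClosed_singleton (x := p)) (c := e) he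
    exact ⟨V, h1, h2, h3, fun h => Set.disjoint_left.1 h4 h rfl⟩
  have hSo : IsOpen S := by
    rw [isOpen_iff_mem_nhds]
    rintro e ⟨R, h1, h2, h3, h4⟩
    filter_upwards [eventually_mem_nhds_iff.2 h3] with e' he'
    exact ⟨R, h1, h2, he', h4⟩
  have hcS : c ∈ S := by
    obtain ⟨V, h1, h2, h3, h4⟩ := key c hc
    exact ⟨V, h2, h1.mem_nhds h3, h1.mem_nhds h3, h4⟩
  refine (hcut p).subset_of_closure_inter_subset hSo ⟨c, hc, hcS⟩ ?_ hd
  rintro e ⟨heS, hep⟩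
  obtain ⟨V, h1, h2, h3, h4⟩ := key e hep
  obtain ⟨e', heV, R, g1, g2, g3, g4⟩ := mem_closure_iff_nhds.1 heS V (h1.mem_nhds h3)
  refine ⟨R ∪ V, g1.union e' (mem_of_mem_nhds g3) heV h2, mem_of_superset g2 subset_union_left,
    mem_of_superset (h1.mem_nhds h3) subset_union_right, ?_⟩
  rw [closure_union]
  rintro (h | h)
  exacts [g4 h, h4 h]

/-! ### Shields -/

theorem isClosed_sUnion_of_finite {X : Type*} [TopologicalSpace X] {𝓢 : Set (Set X)}
    (hfin : 𝓢.Finite) (h : ∀ D ∈ 𝓢, IsClosed D) : IsClosed (⋃₀ 𝓢) := by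
  rw [sUnion_eq_biUnion]
  exact hfin.isClosed_biUnion h

theorem inter_frontier_nonempty_of_open {X : Type*} [TopologicalSpace X] {R Z : Set X}
    (hR : IsPreconnected R) (hZ : IsOpen Z) {y p : X} (hyR : y ∈ R) (hyZ : y ∈ Z)
    (hpR : p ∈ R) (hpZ : p ∉ Z) : (R ∩ frontier Z).Nonempty := by
  by_contra hemp
  refine hpZ (hR.subset_of_closure_inter_subset hZ ⟨y, hyR, hyZ⟩ ?_ hpR)
  rintro x ⟨hx, hxR⟩
  by_contra hxZ
  refine hemp ⟨x, hxR, ?_⟩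
  rw [hZ.frontier_eq]
  exact ⟨hx, hxZ⟩

/-- A shield between the point `p` and the set `Y`: a finite family of sets avoiding `p` and `Y`,
whose union separates `p` from `Y`, and which is linked, i.e. any two members are joined by a chain
of members with consecutive ones intersecting. Separation is expressed by saying that every
connected set through `p` meeting `Y` meets the union; linkedness by saying that a nonempty
subfamily closed under passing to intersecting members is everything. -/
structure Shield {X : Type*} [TopologicalSpace X] (p : X) (Y : Set X) (𝓢 : Set (Set X)) :
    Prop where
  finite : 𝓢.Finite
  notMem : p ∉ ⋃₀ 𝓢
  disj : Disjoint (⋃₀ 𝓢) Y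
  sep : ∀ R : Set X, IsPreconnected R → p ∈ R → (R ∩ Y).Nonempty → (R ∩ ⋃₀ 𝓢).Nonempty
  chain : ∀ 𝓠 : Set (Set X), 𝓠 ⊆ 𝓢 → 𝓠.Nonempty →
    (∀ D ∈ 𝓠, ∀ E ∈ 𝓢, (D ∩ E).Nonempty → E ∈ 𝓠) → 𝓢 ⊆ 𝓠

/-- Existence of shields made of nondegenerate members of `𝓐`. The component `Z` of `p` in the
complement of a finite union of members is small; the frontier of the component `Z'` of
`(closure Z)ᶜ` containing `Y` is connected, nondegenerate and covered by these members. -/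
theorem exists_shield {X : Type*}
    [MetricSpace X] [CompactSpace X] [ConnectedSpace X] [LocallyConnectedSpace X]
    (hcut : ∀ x : X, IsPreconnected ({x}ᶜ : Set X))
    (hcirc : ∀ f : C(X, Circle), f.Nullhomotopic)
    (𝓐 : Set (Set X))
    (hclosed : ∀ A ∈ 𝓐, IsClosed A)
    (hnull : NullFam 𝓐) (hfine : FineFam 𝓐)
    {p : X} {Y : Set X} (cY : IsPreconnected Y) (hY : Y.Nonempty) (hpY : p ∉ closure Y) :
    ∃ 𝓢 ⊆ {D ∈ 𝓐 | D.Nontrivial}, Shield p Y 𝓢 := by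
  obtain ⟨y₀, hy₀⟩ := hY
  obtain ⟨r, hr, hrY⟩ : ∃ r > 0, ∀ y ∈ Y, 2 * r ≤ dist y p := by
    obtain ⟨ε, hε, hb⟩ := Metric.mem_nhds_iff.1 (isClosed_closure.isOpen_compl.mem_nhds hpY)
    refine ⟨ε / 2, by positivity, fun y hy => ?_⟩
    by_contra hlt
    exact hb (Metric.mem_ball.2 (by linarith)) (subset_closure hy)
  -- the finitely many members which come close to `p`, but not to `p` itself, and are large enough
  -- to reach `Y`; staying away from them ensures that the shield misses `Y`
  let 𝓕 : Set (Set X) := {D ∈ 𝓐 | p ∉ D ∧ (D ∩ Metric.ball p r).Nonempty ∧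
    ¬ D ⊆ Metric.ball p (2 * r)}
  have hFfin : 𝓕.Finite := by
    refine (hnull (r / 2) (by positivity)).subset ?_
    rintro D ⟨hD, -, ⟨x, hxD, hx⟩, hns⟩
    obtain ⟨y, hyD, hy⟩ := not_subset.1 hns
    refine ⟨hD, ?_⟩
    have h1 := Metric.dist_le_diam_of_mem (hclosed D hD).isCompact.isBounded hyD hxD
    have h2 := dist_triangle y x p
    rw [Metric.mem_ball] at hx hy
    linarith
  have hFclosed : IsClosed (⋃₀ 𝓕) := isClosed_sUnion_of_finite hFfin fun D hD => hclosed D hD.1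
  have hpF : p ∉ ⋃₀ 𝓕 := by
    rintro ⟨D, hD, hpD⟩
    exact hD.2.1 hpD
  obtain ⟨r', hr', hball⟩ : ∃ r' > 0, Metric.closedBall p r' ⊆ Metric.ball p r ∩ (⋃₀ 𝓕)ᶜ :=
    Metric.nhds_basis_closedBall.mem_iff.1
      (inter_mem (Metric.ball_mem_nhds p hr) (hFclosed.isOpen_compl.mem_nhds hpF))
  -- finitely many members of the family cut `p` off from the sphere of radius `r'`
  have hT : ∃ 𝓣 ⊆ 𝓐, 𝓣.Finite ∧ p ∉ ⋃₀ 𝓣 ∧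
      ∀ z ∈ Metric.sphere p r', z ∉ connectedComponentIn (⋃₀ 𝓣)ᶜ p := by
    have hch : ∀ w : X, ∃ 𝓑 ⊆ 𝓐, 𝓑.Finite ∧ (w ≠ p → SepPts (⋃₀ 𝓑) p w) := by
      intro w
      by_cases hw : w = p
      · exact ⟨∅, empty_subset _, finite_empty, fun h => absurd hw h⟩
      · obtain ⟨𝓑, h1, h2, h3⟩ := hfine p w (Ne.symm hw)
        exact ⟨𝓑, h1, h2, fun _ => h3⟩
    choose 𝓑 hB1 hB2 hB3 using hch
    have hBc : ∀ w, IsClosed (⋃₀ 𝓑 w) := fun w =>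
      isClosed_sUnion_of_finite (hB2 w) fun D hD => hclosed D (hB1 w hD)
    have hne : ∀ w ∈ Metric.sphere p r', w ≠ p := by
      rintro w hw rfl
      simp at hw
      exact hr'.ne hw
    obtain ⟨t, ht, hcov⟩ := (isCompact_sphere p r').elim_nhds_subcover
      (fun w => connectedComponentIn (⋃₀ 𝓑 w)ᶜ w) (fun w hw =>
        ((hBc w).isOpen_compl.connectedComponentIn).mem_nhds
          (mem_connectedComponentIn (hB3 w (hne w hw)).2.1))
    refine ⟨⋃ w ∈ t, 𝓑 w, iUnion₂_subset fun w _ => hB1 w,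
      t.finite_toSet.biUnion fun w _ => hB2 w, ?_, ?_⟩
    · rintro ⟨D, hD, hpD⟩
      obtain ⟨w, hw, hDw⟩ := mem_iUnion₂.1 hD
      exact (hB3 w (hne w (ht w hw))).1 ⟨D, hDw, hpD⟩
    · intro z hz hzC
      obtain ⟨w, hw, hzw⟩ := mem_iUnion₂.1 (hcov hz)
      refine (hB3 w (hne w (ht w hw))).2.2 ?_
      have hsub : connectedComponentIn (⋃₀ ⋃ w ∈ t, 𝓑 w)ᶜ p ⊆
          connectedComponentIn (⋃₀ 𝓑 w)ᶜ p := by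
        refine connectedComponentIn_mono p (compl_subset_compl.2 (sUnion_subset_sUnion ?_))
        exact subset_biUnion_of_mem (u := fun w => 𝓑 w) hw
      rw [connectedComponentIn_eq (hsub hzC), connectedComponentIn_eq hzw]
  obtain ⟨𝓣, hTA, hTfin, hpT, hZsph⟩ := hT
  have hTc : IsClosed (⋃₀ 𝓣) := isClosed_sUnion_of_finite hTfin fun D hD => hclosed D (hTA hD)
  set Z := connectedComponentIn (⋃₀ 𝓣)ᶜ p with hZdef
  have hZo : IsOpen Z := hTc.isOpen_compl.connectedComponentIn
  have hpZ : p ∈ Z := mem_connectedComponentIn hpT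
  have hZball : Z ⊆ Metric.ball p r' := by
    refine isPreconnected_connectedComponentIn.subset_left_of_subset_union Metric.isOpen_ball
      (Metric.isClosed_closedBall (x := p) (ε := r')).isOpen_compl ?_ ?_
      ⟨p, hpZ, Metric.mem_ball_self hr'⟩
    · rw [Set.disjoint_left]
      exact fun x hx hx' => hx' (Metric.ball_subset_closedBall hx)
    · intro z hz
      rcases lt_trichotomy (dist z p) r' with h | h | h
      · exact Or.inl h
      · exact absurd hz (hZsph z h)
      · exact Or.inr (by simpa using h)
  have hKball : closure Z ⊆ Metric.closedBall p r' :=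
    closure_minimal (hZball.trans Metric.ball_subset_closedBall) Metric.isClosed_closedBall
  have hYK : Y ⊆ (closure Z)ᶜ := by
    intro y hy hyK
    have h1 := (hball (hKball hyK)).1
    have h2 := hrY y hy
    rw [Metric.mem_ball] at h1
    linarith
  -- the side of the frontier of `Z` that faces `Y`
  set Z' := connectedComponentIn (closure Z)ᶜ y₀ with hZ'def
  have hYZ' : Y ⊆ Z' := cY.subset_connectedComponentIn hy₀ hYK
  have hpZ' : p ∉ Z' := fun h => connectedComponentIn_subset _ _ h (subset_closure hpZ)
  have cB : IsPreconnected (frontier Z') :=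
    isPreconnected_frontier_component hcirc isClosed_closure
      isPreconnected_connectedComponentIn.closure ⟨p, subset_closure hpZ⟩ y₀
  have hBK : frontier Z' ⊆ closure Z := frontier_connectedComponentIn_subset isClosed_closure y₀
  have hBZ : Disjoint (frontier Z') Z := by
    have : Disjoint (closure Z') Z := by
      refine Disjoint.closure_left ?_ hZo
      rw [Set.disjoint_left]
      exact fun x hx hx' => connectedComponentIn_subset _ _ hx (subset_closure hx')
    exact this.mono_left frontier_subset_closure
  have hBT : frontier Z' ⊆ ⋃₀ 𝓣 := by
    intro b hb
    apply frontier_connectedComponentIn_subset hTc p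
    rw [hZo.frontier_eq]
    exact ⟨hBK hb, fun h => Set.disjoint_left.1 hBZ hb h⟩
  have hBsep : ∀ R : Set X, IsPreconnected R → p ∈ R → (R ∩ Y).Nonempty →
      (R ∩ frontier Z').Nonempty := by
    rintro R hR hpR ⟨y, hyR, hyY⟩
    exact inter_frontier_nonempty_of_open hR
      isClosed_closure.isOpen_compl.connectedComponentIn hyR (hYZ' hyY) hpR hpZ'
  have hBnt : (frontier Z').Nontrivial := by
    rw [← not_subsingleton_iff]
    intro hss
    -- a one-point frontier would consist of a cut point of `X`
    obtain ⟨b, -, hb⟩ := hBsep univ isPreconnected_univ (mem_univ p) ⟨y₀, mem_univ _, hy₀⟩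
    obtain ⟨b', hb', hb''⟩ := hBsep {b}ᶜ (hcut b)
      (fun h => Set.disjoint_left.1 hBZ hb (h ▸ hpZ))
      ⟨y₀, fun h => hYK hy₀ (hBK (h ▸ hb)), hy₀⟩
    exact hb' (hss hb'' hb)
  let 𝓢 : Set (Set X) := {D ∈ 𝓣 | D.Nontrivial ∧ (D ∩ frontier Z').Nonempty}
  have hSfin : 𝓢.Finite := hTfin.subset fun D hD => hD.1
  have hSc : ∀ 𝓠 ⊆ 𝓢, IsClosed (⋃₀ 𝓠) := fun 𝓠 hP =>
    isClosed_sUnion_of_finite (hSfin.subset hP) fun D hD => hclosed D (hTA (hP hD).1)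
  -- one-point members are isolated in the frontier, which is connected and nondegenerate
  have hBS : frontier Z' ⊆ ⋃₀ 𝓢 := by
    let F : Set X := (⋃₀ {D ∈ 𝓣 | ¬ D.Nontrivial}) \ ⋃₀ 𝓢
    have hF : F.Finite := by
      refine Set.Finite.subset ?_ sdiff_subset
      refine (hTfin.subset (sep_subset _ _)).sUnion ?_
      rintro D ⟨-, hD⟩
      exact (not_nontrivial_iff.1 hD).finite
    have hcov : frontier Z' ⊆ ⋃₀ 𝓢 ∪ F := by
      intro b hb
      by_cases hbS : b ∈ ⋃₀ 𝓢
      · exact Or.inl hbS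
      · obtain ⟨D, hD, hbD⟩ := hBT hb
        refine Or.inr ⟨⟨D, ⟨hD, fun hnt => hbS ⟨D, ⟨hD, hnt, b, hbD, hb⟩, hbD⟩⟩, hbD⟩, hbS⟩
    rcases isPreconnected_iff_subset_of_disjoint_closed.1 cB _ _ (hSc 𝓢 subset_rfl) hF.isClosed
      hcov (by
        rw [Set.eq_empty_iff_forall_notMem]
        rintro x ⟨-, hx, hx'⟩
        exact hx'.2 hx) with h | h
    · exact h
    · exact absurd (hF.countable.isTotallyDisconnected _ h cB) (not_subsingleton_iff.2 hBnt)
  refine ⟨𝓢, fun D hD => ⟨hTA hD.1, hD.2.1⟩, hSfin, ?_, ?_, ?_, ?_⟩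
  · rintro ⟨D, hD, hpD⟩
    exact hpT ⟨D, hD.1, hpD⟩
  · rw [Set.disjoint_left]
    rintro y ⟨D, hD, hyD⟩ hyY
    obtain ⟨b, hbD, hb⟩ := hD.2.2
    have hbW := hball (hKball (hBK hb))
    have hDsub : D ⊆ Metric.ball p (2 * r) := by
      by_contra hns
      exact hbW.2 ⟨D, ⟨hTA hD.1, fun h => hpT ⟨D, hD.1, h⟩, ⟨b, hbD, hbW.1⟩, hns⟩, hbD⟩
    have h1 := hDsub hyD
    have h2 := hrY y hyY
    rw [Metric.mem_ball] at h1
    linarith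
  · intro R hR hpR hRY
    exact (hBsep R hR hpR hRY).mono (inter_subset_inter_right _ hBS)
  · intro 𝓠 hP ⟨D, hD⟩ hst E hE
    by_contra hEP
    have hcov : frontier Z' ⊆ ⋃₀ 𝓠 ∪ ⋃₀ (𝓢 \ 𝓠) := by
      rw [← sUnion_union, union_sdiff_cancel hP]
      exact hBS
    rcases isPreconnected_iff_subset_of_disjoint_closed.1 cB _ _ (hSc 𝓠 hP)
      (hSc (𝓢 \ 𝓠) sdiff_subset) hcov (by
        rw [Set.eq_empty_iff_forall_notMem]
        rintro x ⟨-, ⟨D₁, hD₁, hx₁⟩, ⟨D₂, hD₂, hx₂⟩⟩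
        exact hD₂.2 (hst D₁ hD₁ D₂ hD₂.1 ⟨x, hx₁, hx₂⟩)) with h | h
    · obtain ⟨b, hbE, hb⟩ := hE.2.2
      obtain ⟨D₁, hD₁, hx₁⟩ := h hb
      exact hEP (hst D₁ hD₁ E hE ⟨b, hx₁, hbE⟩)
    · obtain ⟨b, hbD, hb⟩ := (hP hD).2.2
      obtain ⟨D₁, hD₁, hx₁⟩ := h hb
      exact hD₁.2 (hst D hD D₁ hD₁.1 ⟨b, hbD, hx₁⟩)

/-! ### Subsequences and shrinking sets -/

/-- The images of `D` under the sequence `h` converge to the point `q`, uniformly on `D`. -/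
def ShrinksTo {G X : Type*} [Group G] [MulAction G X] [TopologicalSpace X]
    (h : ℕ → G) (D : Set X) (q : X) : Prop :=
  ∀ U ∈ 𝓝 q, ∀ᶠ i in atTop, h i • D ⊆ U

/-- Every nondegenerate member of `𝓐` is either eventually sent to a fixed set by the sequence `h`
or shrinks to a point. -/
def Dichotomous {G X : Type*} [Group G] [MulAction G X] [TopologicalSpace X]
    (𝓐 : Set (Set X)) (h : ℕ → G) : Prop :=
  ∀ A ∈ 𝓐, A.Nontrivial → (∃ B, ∀ᶠ i in atTop, h i • A = B) ∨ ∃ x, ShrinksTo h A x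

section Sequences

variable {G X : Type*} [Group G] [MulAction G X]

theorem ShrinksTo.tendsto [TopologicalSpace X] {h : ℕ → G} {D : Set X} {q t : X}
    (hD : ShrinksTo h D q) (ht : t ∈ D) : Tendsto (fun i => h i • t) atTop (𝓝 q) := by
  rw [tendsto_def]
  intro U hU
  filter_upwards [hD U hU] with i hi
  exact hi (smul_mem_smul_set ht)

theorem ShrinksTo.comp [TopologicalSpace X] {h : ℕ → G} {D : Set X} {q : X}
    (hD : ShrinksTo h D q) {φ : ℕ → ℕ} (hφ : StrictMono φ) : ShrinksTo (h ∘ φ) D q :=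
  fun U hU => hφ.tendsto_atTop.eventually (hD U hU)

theorem Dichotomous.comp [TopologicalSpace X] {𝓐 : Set (Set X)} {h : ℕ → G}
    (hd : Dichotomous 𝓐 h) {φ : ℕ → ℕ} (hφ : StrictMono φ) : Dichotomous 𝓐 (h ∘ φ) := by
  intro A hA hnt
  rcases hd A hA hnt with ⟨B, hB⟩ | ⟨x, hx⟩
  · exact Or.inl ⟨B, hφ.tendsto_atTop.eventually hB⟩
  · exact Or.inr ⟨x, hx.comp hφ⟩

/-- There are countably many nondegenerate members, so a diagonal subsequence decides, for all
`A` and `B` among them, whether `g i • A = B`, and makes the images of a base point of each `A`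
converge. If no `B` is hit, nullness makes the diameters of `g i • A` tend to zero. -/
theorem exists_dichotomous_subseq [MetricSpace X] [CompactSpace X] {𝓐 : Set (Set X)}
    (hclosed : ∀ A ∈ 𝓐, IsClosed A) (hinv : ∀ g : G, ∀ A ∈ 𝓐, g • A ∈ 𝓐) (hnull : NullFam 𝓐)
    (g : ℕ → G) : ∃ φ : ℕ → ℕ, StrictMono φ ∧ Dichotomous 𝓐 (g ∘ φ) := by
  classical
  have hcount : {D ∈ 𝓐 | D.Nontrivial}.Countable := by
    refine (countable_iUnion fun n : ℕ =>
      (hnull (1 / ((n : ℝ) + 1)) Nat.one_div_pos_of_nat).countable).mono ?_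
    rintro D ⟨hD, hnt⟩
    obtain ⟨n, hn⟩ := exists_nat_one_div_lt
      (Metric.diam_pos hnt (hclosed D hD).isCompact.isBounded)
    exact mem_iUnion.2 ⟨n, hD, hn⟩
  have : Countable {D ∈ 𝓐 | D.Nontrivial} := hcount.to_subtype
  let ι := {D ∈ 𝓐 | D.Nontrivial}
  have hpt : ∀ A : ι, ∃ a, a ∈ A.1 := fun A => A.2.2.nonempty
  choose pt hpt using hpt
  -- the compact metrizable space recording all equalities `g i • A = B` and base point images
  let s : ℕ → (ι × ι → Bool) × (ι → X) := fun i =>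
    (fun ab => decide (g i • ab.1.1 = ab.2.1), fun a => g i • pt a)
  obtain ⟨⟨b, x⟩, φ, hφ, hlim⟩ := CompactSpace.tendsto_subseq s
  refine ⟨φ, hφ, fun A hA hnt => ?_⟩
  have hb : ∀ B : ι, ∀ᶠ i in atTop, decide (g (φ i) • A = B.1) = b (⟨A, hA, hnt⟩, B) := by
    intro B
    have h1 := (continuous_apply (⟨A, hA, hnt⟩, B)).tendsto b |>.comp
      ((continuous_fst.tendsto (b, x)).comp hlim)
    exact h1 (by simp : ({b (⟨A, hA, hnt⟩, B)} : Set Bool) ∈ 𝓝 _)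
  have hx : Tendsto (fun i => g (φ i) • pt ⟨A, hA, hnt⟩) atTop (𝓝 (x ⟨A, hA, hnt⟩)) :=
    (continuous_apply (⟨A, hA, hnt⟩ : ι)).tendsto x |>.comp
      ((continuous_snd.tendsto (b, x)).comp hlim)
  by_cases hex : ∃ B : ι, b (⟨A, hA, hnt⟩, B) = true
  · obtain ⟨B, hB⟩ := hex
    refine Or.inl ⟨B.1, ?_⟩
    filter_upwards [hb B] with i hi
    exact of_decide_eq_true (hi.trans hB)
  · right
    refine ⟨x ⟨A, hA, hnt⟩, fun U hU => ?_⟩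
    obtain ⟨ε, hε, hεU⟩ := Metric.mem_nhds_iff.1 hU
    have hsmall : ∀ᶠ i in atTop, ∀ D ∈ {D ∈ 𝓐 | ε / 2 < Metric.diam D}, g (φ i) • A ≠ D := by
      rw [Filter.eventually_all_finite (hnull (ε / 2) (by positivity))]
      rintro D ⟨hD, -⟩
      by_cases hDnt : D.Nontrivial
      · filter_upwards [hb ⟨D, hD, hDnt⟩] with i hi heq
        exact hex ⟨⟨D, hD, hDnt⟩, by rw [← hi]; exact decide_eq_true heq⟩
      · refine Eventually.of_forall fun i heq => hDnt ?_
        rw [← heq]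
        exact hnt.image (MulAction.injective _)
    filter_upwards [hsmall, hx (Metric.ball_mem_nhds _ (half_pos hε))] with i hi hi'
    refine Subset.trans ?_ hεU
    intro y hy
    have hmem : g (φ i) • A ∈ 𝓐 := hinv _ A hA
    have hdiam : Metric.diam (g (φ i) • A) ≤ ε / 2 := by
      by_contra hlt
      exact hi _ ⟨hmem, not_le.1 hlt⟩ rfl
    have h1 := Metric.dist_le_diam_of_mem (hclosed _ hmem).isCompact.isBounded hy
      (smul_mem_smul_set (a := g (φ i)) (hpt ⟨A, hA, hnt⟩))
    have h2 := dist_triangle y (g (φ i) • pt ⟨A, hA, hnt⟩) (x ⟨A, hA, hnt⟩)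
    have h3 := Metric.mem_ball.1 hi'
    rw [Metric.mem_ball]
    linarith

/-- Sequential criterion for a convergence sequence on a compact space. -/
theorem convSeqOn_univ_of_forall [MetricSpace X] [CompactSpace X] (g : ℕ → G) (n p : X)
    (H : ∀ φ : ℕ → ℕ, StrictMono φ → ∀ (c : ℕ → X) (c₀ c₁ : X), c₀ ≠ n →
      Tendsto c atTop (𝓝 c₀) → Tendsto (fun i => g (φ i) • c i) atTop (𝓝 c₁) → c₁ = p) :
    ConvSeqOn univ (fun i => (g i • · : X → X)) n p := by
  refine ⟨mem_univ _, mem_univ _, fun C _ hC hnC U hU hpU => ?_⟩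
  by_contra hev
  obtain ⟨φ, hφ, hbad⟩ := extraction_of_frequently_atTop (not_eventually.1 hev)
  have hch : ∀ i, ∃ c ∈ C, g (φ i) • c ∉ U := by
    intro i
    obtain ⟨_, ⟨c, hc, rfl⟩, hcU⟩ := not_subset.1 (hbad i)
    exact ⟨c, hc, hcU⟩
  choose c hc hcU using hch
  obtain ⟨c₀, hc₀, ψ, hψ, hlim⟩ := hC.tendsto_subseq hc
  obtain ⟨c₁, χ, hχ, hlim'⟩ := CompactSpace.tendsto_subseq fun i => g (φ (ψ i)) • c (ψ i)
  have heq := H (φ ∘ ψ ∘ χ) (hφ.comp (hψ.comp hχ)) (c ∘ ψ ∘ χ) c₀ c₁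
    (fun h => hnC (h ▸ hc₀)) (hlim.comp hχ.tendsto_atTop) hlim'
  have : c₁ ∈ Uᶜ := hU.isClosed_compl.mem_of_tendsto hlim'
    (Eventually.of_forall fun i => hcU _)
  exact this (heq ▸ hpU)

/-- If a shield between `p` and `Y` shrinks to `q` under `h`, then sequences tending to `p` and
lying in `Y` cannot both have images converging to points other than `q`. -/
theorem Shield.not_pulled_apart [MetricSpace X] [LocallyConnectedSpace X]
    [ContinuousConstSMul G X]
    (hcut : ∀ x : X, IsPreconnected ({x}ᶜ : Set X)) {p q : X} {Y : Set X} {𝓢 : Set (Set X)}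
    (S : Shield p Y 𝓢) (hS : ∀ D ∈ 𝓢, IsClosed D) {h : ℕ → G}
    (hsh : ∀ D ∈ 𝓢, ShrinksTo h D q) {x y : ℕ → X} {x₁ y₁ : X}
    (hx : Tendsto x atTop (𝓝 p)) (hy : ∀ᶠ i in atTop, y i ∈ Y)
    (hx₁ : Tendsto (fun i => h i • x i) atTop (𝓝 x₁))
    (hy₁ : Tendsto (fun i => h i • y i) atTop (𝓝 y₁)) (hxq : x₁ ≠ q) (hyq : y₁ ≠ q) : False := by
  obtain ⟨R, cR, hRx, hRy, hqR⟩ := exists_join_away hcut hxq hyq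
  obtain ⟨N, hNo, cN, hpN, hNS⟩ :=
    exists_preconnected_nhd (isClosed_sUnion_of_finite S.finite hS) S.notMem
  have hmiss : ∀ᶠ i in atTop, ∀ D ∈ 𝓢, h i • D ⊆ (closure R)ᶜ := by
    rw [Filter.eventually_all_finite S.finite]
    exact fun D hD => hsh D hD _ (isClosed_closure.isOpen_compl.mem_nhds hqR)
  obtain ⟨i, h1, h2, h3, h4, h5⟩ := (hmiss.and ((hx.eventually_mem (hNo.mem_nhds hpN)).and
    (hy.and ((hx₁.eventually_mem hRx).and (hy₁.eventually_mem hRy))))).exists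
  -- the preimage of `R` together with `N` joins `p` to `y i ∈ Y` in the complement of the shield
  have c1 : IsPreconnected ((h i)⁻¹ • R) := cR.image _ (continuous_const_smul _).continuousOn
  have hc := c1.union (x i) (by rw [mem_inv_smul_set_iff]; exact h4) h2 cN
  obtain ⟨w, hw, D, hD, hwD⟩ := S.sep _ hc (Or.inr hpN)
    ⟨y i, Or.inl (by rw [mem_inv_smul_set_iff]; exact h5), h3⟩
  rcases hw with hw | hw
  · rw [mem_inv_smul_set_iff] at hw
    exact h1 D hD (smul_mem_smul_set hwD) (subset_closure hw)
  · exact Set.disjoint_left.1 hNS (subset_closure hw) ⟨D, hD, hwD⟩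

/-- Shrinking to `q` propagates along a shield by linkedness. -/
theorem Shield.shrinksTo_of_step [TopologicalSpace X] {p q : X} {Y : Set X} {𝓢 : Set (Set X)}
    (S : Shield p Y 𝓢) {h : ℕ → G} {D₀ : Set X} (hD₀ : D₀ ∈ 𝓢) (h₀ : ShrinksTo h D₀ q)
    (hstep : ∀ E ∈ 𝓢, ∀ t ∈ E, Tendsto (fun i => h i • t) atTop (𝓝 q) → ShrinksTo h E q) :
    ∀ D ∈ 𝓢, ShrinksTo h D q := by
  have := S.chain {D ∈ 𝓢 | ShrinksTo h D q} (sep_subset _ _) ⟨D₀, hD₀, h₀⟩ (by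
    rintro D ⟨-, hD⟩ E hE ⟨t, htD, htE⟩
    exact ⟨hE, hstep E hE t htE (hD.tendsto htD)⟩)
  exact fun D hD => (this hD).2

theorem Shield.exists_common_limit [MetricSpace X] [ConnectedSpace X] {p : X} {Y : Set X}
    {𝓢 : Set (Set X)} (S : Shield p Y 𝓢) (hY : Y.Nonempty) {h : ℕ → G}
    (hsh : ∀ D ∈ 𝓢, ∃ q, ShrinksTo h D q) : ∃ q, ∀ D ∈ 𝓢, ShrinksTo h D q := by
  obtain ⟨t, -, D₀, hD₀, -⟩ := S.sep univ isPreconnected_univ (mem_univ p)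
    (by rwa [univ_inter])
  obtain ⟨q, hq⟩ := hsh D₀ hD₀
  refine ⟨q, S.shrinksTo_of_step hD₀ hq fun E hE t ht hlim => ?_⟩
  obtain ⟨q', hq'⟩ := hsh E hE
  rwa [tendsto_nhds_unique hlim (hq'.tendsto ht)]

end Sequences

/-! ### Convergence dynamics -/

section Dynamics

variable {G X : Type*} [Group G] [MulAction G X]
    [MetricSpace X] [CompactSpace X] [ConnectedSpace X] [LocallyConnectedSpace X]
    [ContinuousConstSMul G X]

/-- If every nondegenerate member of `𝓐` shrinks under the inverses of `h`, then all nondegenerate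
sets shrinking under `h` have the same limit: otherwise a shield between two limits contradicts
`Shield.not_pulled_apart` for the inverses. -/
theorem shrinksTo_limit_unique
    (hcut : ∀ x : X, IsPreconnected ({x}ᶜ : Set X))
    (hcirc : ∀ f : C(X, Circle), f.Nullhomotopic) {𝓐 : Set (Set X)}
    (hclosed : ∀ A ∈ 𝓐, IsClosed A) (hnull : NullFam 𝓐) (hfine : FineFam 𝓐) {h : ℕ → G}
    (hinvsh : ∀ A ∈ 𝓐, A.Nontrivial → ∃ q, ShrinksTo (fun i => (h i)⁻¹) A q)
    {A B : Set X} (hA : A.Nontrivial) (hB : B.Nontrivial) {x y : X}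
    (hx : ShrinksTo h A x) (hy : ShrinksTo h B y) : x = y := by
  by_contra hxy
  obtain ⟨Y, hYo, cY, hyY, hYx⟩ := exists_preconnected_nhd (isClosed_singleton (x := x))
    (c := y) (Ne.symm hxy)
  obtain ⟨𝓢, hS, S⟩ := exists_shield hcut hcirc 𝓐 hclosed hnull hfine cY ⟨y, hyY⟩
    (fun h => Set.disjoint_left.1 hYx h rfl)
  obtain ⟨q, hq⟩ := S.exists_common_limit ⟨y, hyY⟩ fun D hD => hinvsh D (hS hD).1 (hS hD).2
  obtain ⟨a, ha, haq⟩ := hA.exists_ne q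
  obtain ⟨b, hb, hbq⟩ := hB.exists_ne q
  refine S.not_pulled_apart hcut (fun D hD => hclosed D (hS hD).1) hq (hx.tendsto ha)
    ((hy.tendsto hb) (hYo.mem_nhds hyY)) ?_ ?_ haq hbq <;> simp

/-- If all nondegenerate members shrink under `g` and under its inverses, a subsequence of `g` is a
convergence sequence, with repeller the common limit `q` under the inverses. -/
theorem exists_convSeqOn_of_shrinking [Nontrivial X]
    (hcut : ∀ x : X, IsPreconnected ({x}ᶜ : Set X))
    (hcirc : ∀ f : C(X, Circle), f.Nullhomotopic) {𝓐 : Set (Set X)}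
    (hclosed : ∀ A ∈ 𝓐, IsClosed A) (hnull : NullFam 𝓐) (hfine : FineFam 𝓐) {g : ℕ → G}
    (hsh : ∀ A ∈ 𝓐, A.Nontrivial → ∃ q, ShrinksTo g A q)
    (hinvsh : ∀ A ∈ 𝓐, A.Nontrivial → ∃ q, ShrinksTo (fun i => (g i)⁻¹) A q) :
    ∃ k : ℕ → ℕ, StrictMono k ∧ ∃ n p : X,
      ConvSeqOn univ (fun i => (g (k i) • · : X → X)) n p := by
  obtain ⟨q, hq⟩ : ∃ q, ∀ A ∈ 𝓐, A.Nontrivial → ShrinksTo (fun i => (g i)⁻¹) A q := by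
    by_cases hex : ∃ A ∈ 𝓐, A.Nontrivial
    · obtain ⟨A, hA, hnt⟩ := hex
      obtain ⟨q, hq⟩ := hinvsh A hA hnt
      refine ⟨q, fun B hB hBnt => ?_⟩
      obtain ⟨q', hq'⟩ := hinvsh B hB hBnt
      rwa [shrinksTo_limit_unique hcut hcirc hclosed hnull hfine
        (h := fun i => (g i)⁻¹) (by simpa using hsh) hnt hBnt hq hq']
    · obtain ⟨q⟩ : Nonempty X := inferInstance
      exact ⟨q, fun A hA hnt => absurd ⟨A, hA, hnt⟩ hex⟩
  obtain ⟨d, hd⟩ := exists_ne q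
  obtain ⟨p, k, hk, hp⟩ := CompactSpace.tendsto_subseq fun i => g i • d
  refine ⟨k, hk, q, p, convSeqOn_univ_of_forall (g ∘ k) q p ?_⟩
  intro φ hφ c c₀ c₁ hc₀ hc hc₁
  by_contra hne
  obtain ⟨Y, hYo, cY, hyY, hYx⟩ := exists_preconnected_nhd (isClosed_singleton (x := c₁))
    (c := p) (Ne.symm hne)
  obtain ⟨𝓢, hS, S⟩ := exists_shield hcut hcirc 𝓐 hclosed hnull hfine cY ⟨p, hyY⟩
    (fun h => Set.disjoint_left.1 hYx h rfl)
  refine S.not_pulled_apart hcut (fun D hD => hclosed D (hS hD).1)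
    (fun D hD => (hq D (hS hD).1 (hS hD).2).comp (hk.comp hφ)) hc₁
    ((hp.comp hφ.tendsto_atTop) (hYo.mem_nhds hyY)) ?_ ?_ hc₀ hd
  · simpa using hc
  · simp

/-- If `g i` carries `A` to `B` and converges to `p` on `A` away from `n`, then it does so on all
of `X`, in sequential form. The shield used lies between `n` and a connected set `Y` containing a
neighbourhood of `c₀`, a point of `A`, and `m` unless `m = n`. -/
theorem limit_eq_attractor
    (hcut : ∀ x : X, IsPreconnected ({x}ᶜ : Set X))
    (hcirc : ∀ f : C(X, Circle), f.Nullhomotopic) {𝓐 : Set (Set X)}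
    (hclosed : ∀ A ∈ 𝓐, IsClosed A) (hnull : NullFam 𝓐) (hfine : FineFam 𝓐) {g : ℕ → G}
    (hd : Dichotomous 𝓐 g) {A B : Set X} (hA : A ∈ 𝓐) (cA : IsPreconnected A)
    (hnt : A.Nontrivial) (hAB : ∀ i, g i • A = B) {n p m : X} (hnA : n ∈ A)
    (hconv : ∀ C ⊆ A, IsCompact C → n ∉ C → ∀ U, IsOpen U → p ∈ U → ∀ᶠ i in atTop, g i • C ⊆ U)
    (hm : Tendsto (fun i => (g i)⁻¹ • p) atTop (𝓝 m))
    {c : ℕ → X} {c₀ c₁ : X} (hc₀ : c₀ ≠ n) (hc : Tendsto c atTop (𝓝 c₀))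
    (hc₁ : Tendsto (fun i => g i • c i) atTop (𝓝 c₁)) : c₁ = p := by
  by_contra hne
  obtain ⟨a, haA, han⟩ := hnt.exists_ne n
  obtain ⟨Y, cY, hYc, haY, hnY, hmY⟩ : ∃ Y : Set X, IsPreconnected Y ∧ Y ∈ 𝓝 c₀ ∧ a ∈ Y ∧
      n ∉ closure Y ∧ (m = n ∨ m ∈ Y) := by
    obtain ⟨R, h1, h2, h3, h4⟩ := exists_join_away hcut hc₀ han
    by_cases hmn : m = n
    · exact ⟨R, h1, h2, mem_of_mem_nhds h3, h4, Or.inl hmn⟩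
    · obtain ⟨R', g1, g2, g3, g4⟩ := exists_join_away hcut hc₀ hmn
      refine ⟨R ∪ R', h1.union c₀ (mem_of_mem_nhds h2) (mem_of_mem_nhds g2) g1,
        mem_of_superset h2 subset_union_left, Or.inl (mem_of_mem_nhds h3), ?_,
        Or.inr (Or.inr (mem_of_mem_nhds g3))⟩
      rw [closure_union]
      rintro (h | h)
      exacts [h4 h, g4 h]
  obtain ⟨𝓢, hS, S⟩ := exists_shield hcut hcirc 𝓐 hclosed hnull hfine cY ⟨a, haY⟩ hnY
  -- a shield member sent to a fixed set containing `p` would contain `m`, which the shield misses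
  have hstep : ∀ E ∈ 𝓢, ∀ t ∈ E, Tendsto (fun i => g i • t) atTop (𝓝 p) → ShrinksTo g E p := by
    intro E hE t ht hlim
    rcases hd E (hS hE).1 (hS hE).2 with ⟨E', hE'⟩ | ⟨x, hx⟩
    · exfalso
      have hEcl := hclosed E (hS hE).1
      have hE'cl : IsClosed E' := by
        obtain ⟨i, rfl⟩ := hE'.exists
        exact hEcl.smul (g i)
      have hpE' : p ∈ E' := hE'cl.mem_of_tendsto hlim
        (hE'.mono fun i hi => hi ▸ smul_mem_smul_set ht)
      have hmE : m ∈ E := hEcl.mem_of_tendsto hm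
        (hE'.mono fun i hi => mem_smul_set_iff_inv_smul_mem.1 (hi ▸ hpE'))
      rcases hmY with rfl | hmY
      · exact S.notMem ⟨E, hE, hmE⟩
      · exact Set.disjoint_left.1 S.disj ⟨E, hE, hmE⟩ hmY
    · rwa [tendsto_nhds_unique hlim (hx.tendsto ht)]
  have hpt : ∀ t ∈ A, t ≠ n → Tendsto (fun i => g i • t) atTop (𝓝 p) := by
    intro t ht htn
    rw [tendsto_nhds]
    intro U hU hpU
    filter_upwards [hconv {t} (singleton_subset_iff.2 ht) isCompact_singleton
      (fun h => htn h.symm) U hU hpU] with i hi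
    exact hi (smul_mem_smul_set rfl)
  obtain ⟨t, htA, D₀, hD₀, htD⟩ := S.sep A cA hnA ⟨a, haA, haY⟩
  have htp := hpt t htA fun h => S.notMem ⟨D₀, hD₀, h ▸ htD⟩
  have hall := S.shrinksTo_of_step hD₀ (hstep D₀ hD₀ t htD htp) hstep
  obtain ⟨b, hbB, hbp⟩ : ∃ b ∈ B, b ≠ p := by
    rw [← hAB 0]
    exact (hnt.image (MulAction.injective (g 0))).exists_ne p
  have hz : Tendsto (fun i => (g i)⁻¹ • b) atTop (𝓝 n) := by
    rw [tendsto_nhds]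
    intro V hV hnV
    filter_upwards [hconv (A \ V) sdiff_subset ((hclosed A hA).sdiff hV).isCompact
      (fun h => h.2 hnV) {b}ᶜ isOpen_compl_singleton (Ne.symm hbp)] with i hi
    by_contra hiV
    have hzA : (g i)⁻¹ • b ∈ A := mem_smul_set_iff_inv_smul_mem.1 (hAB i ▸ hbB)
    have := hi (smul_mem_smul_set (a := g i) ⟨hzA, hiV⟩)
    simp at this
  refine S.not_pulled_apart hcut (fun D hD => hclosed D (hS hD).1) hall hz (hc hYc) (x₁ := b)
    ?_ hc₁ hbp hne
  simp

/-- If `g i • A = B` eventually, then the elements `(g N)⁻¹ * g i` stabilize `A` for a large fixed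
`N`, and the convergence action of the stabilizer on `A` extends to a convergence subsequence of
`g` on `X`. -/
theorem exists_convSeqOn_of_stable
    (hcut : ∀ x : X, IsPreconnected ({x}ᶜ : Set X))
    (hcirc : ∀ f : C(X, Circle), f.Nullhomotopic) {𝓐 : Set (Set X)}
    (hclosed : ∀ A ∈ 𝓐, IsClosed A) (hnull : NullFam 𝓐) (hfine : FineFam 𝓐) {g : ℕ → G}
    (hg : Function.Injective g)
    (hd : Dichotomous 𝓐 g) {A B : Set X} (hA : A ∈ 𝓐) (cA : IsPreconnected A)
    (hnt : A.Nontrivial) (hAB : ∀ᶠ i in atTop, g i • A = B)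
    (hstab : ConvGroupOn (stab G A) A) :
    ∃ k : ℕ → ℕ, StrictMono k ∧ ∃ n p : X,
      ConvSeqOn univ (fun i => (g (k i) • · : X → X)) n p := by
  obtain ⟨N, hN⟩ := eventually_atTop.1 hAB
  obtain ⟨k, hk, n, p₀, hnA, -, hconv⟩ := hstab (fun i => (g N)⁻¹ * g (i + N)) (by
      intro i
      change ((g N)⁻¹ * g (i + N)) • A = A
      rw [mul_smul, hN _ (Nat.le_add_left _ _), ← hN N le_rfl, inv_smul_smul])
    (by
      intro i j hij
      have := hg (mul_left_cancel hij)
      omega)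
  obtain ⟨m, l, hl, hm⟩ :=
    CompactSpace.tendsto_subseq fun i => (g (k i + N))⁻¹ • (g N • p₀)
  have hmono : StrictMono fun i => k (l i) + N := fun i j hij =>
    Nat.add_lt_add_right (hk (hl hij)) N
  refine ⟨fun i => k (l i) + N, hmono, n, g N • p₀,
    convSeqOn_univ_of_forall (fun i => g (k (l i) + N)) n _ ?_⟩
  intro φ hφ c c₀ c₁ hc₀ hc hc₁
  refine limit_eq_attractor hcut hcirc hclosed hnull hfine
    (g := fun i => g (k (l (φ i)) + N)) (hd.comp (hmono.comp hφ)) hA cA hnt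
    (fun i => hN _ (Nat.le_add_left _ _)) hnA ?_ (hm.comp hφ.tendsto_atTop) hc₀ hc hc₁
  intro C hCA hC hnC U hU hpU
  have hev := hconv C hCA hC hnC ((g N)⁻¹ • U) (hU.smul _) (by
    rwa [mem_inv_smul_set_iff])
  filter_upwards [(hl.comp hφ).tendsto_atTop.eventually hev] with i hi
  rintro _ ⟨x, hx, rfl⟩
  have := hi ⟨x, hx, rfl⟩
  simpa [mem_inv_smul_set_iff, mul_smul] using this

end Dynamics

/-- Main Theorem: bootstrapping for convergence groups acting on a Peano continuum
without cut points admitting no essential map to the circle. -/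
theorem bootstrap_main {G X : Type*} [Group G] [MulAction G X]
    [MetricSpace X] [CompactSpace X] [ConnectedSpace X] [LocallyConnectedSpace X]
    [ContinuousConstSMul G X]
    (hcut : ∀ x : X, IsPreconnected ({x}ᶜ : Set X))
    (hcirc : ∀ f : C(X, Circle), f.Nullhomotopic)
    (𝓐 : Set (Set X))
    (hclosed : ∀ A ∈ 𝓐, IsClosed A)
    (hconn : ∀ A ∈ 𝓐, IsConnected A)
    (hinv : ∀ g : G, ∀ A ∈ 𝓐, g • A ∈ 𝓐)
    (hnull : NullFam 𝓐) (hfine : FineFam 𝓐)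
    (hstab : ∀ A ∈ 𝓐, ConvGroupOn (stab G A) A) :
    ConvGroupOn (Set.univ : Set G) (Set.univ : Set X) := by
  intro g _ hg
  rcases subsingleton_or_nontrivial X with hX | hX
  · obtain ⟨x⟩ : Nonempty X := inferInstance
    refine ⟨id, strictMono_id, x, x, mem_univ _, mem_univ _, fun C _ _ hx U _ _ => ?_⟩
    refine Eventually.of_forall fun i => ?_
    rintro _ ⟨y, hy, rfl⟩
    exact absurd (Subsingleton.elim y x ▸ hy) hx
  obtain ⟨φ, hφ, hd⟩ := exists_dichotomous_subseq hclosed hinv hnull g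
  obtain ⟨ψ, hψ, hd'⟩ := exists_dichotomous_subseq hclosed hinv hnull fun i => (g (φ i))⁻¹
  suffices H : ∃ k : ℕ → ℕ, StrictMono k ∧ ∃ n p : X,
      ConvSeqOn univ (fun i => ((g ∘ φ ∘ ψ) (k i) • · : X → X)) n p by
    obtain ⟨k, hk, n, p, h⟩ := H
    exact ⟨φ ∘ ψ ∘ k, hφ.comp (hψ.comp hk), n, p, h⟩
  have hdh : Dichotomous 𝓐 (g ∘ φ ∘ ψ) := hd.comp hψ
  by_cases hex : ∃ A ∈ 𝓐, A.Nontrivial ∧ ∃ B, ∀ᶠ i in atTop, (g ∘ φ ∘ ψ) i • A = B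
  · obtain ⟨A, hA, hnt, B, hB⟩ := hex
    exact exists_convSeqOn_of_stable hcut hcirc hclosed hnull hfine
      (hg.comp (hφ.comp hψ).injective) hdh hA (hconn A hA).isPreconnected hnt hB (hstab A hA)
  · refine exists_convSeqOn_of_shrinking hcut hcirc hclosed hnull hfine ?_ ?_
    · intro A hA hnt
      exact (hdh A hA hnt).resolve_left fun h => hex ⟨A, hA, hnt, h⟩
    · intro A hA hnt
      refine (hd' A hA hnt).resolve_left ?_
      rintro ⟨B, hB⟩
      -- if the inverses eventually carry `A` to `B`, then the sequence carries `B` to `A`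
      have hev : ∀ᶠ i in atTop, (g ∘ φ ∘ ψ) i • B = A := by
        filter_upwards [hB] with i hi
        rw [← hi]
        exact smul_inv_smul _ _
      obtain ⟨i, hi⟩ := hB.exists
      refine hex ⟨B, hi ▸ hinv _ A hA, ?_, A, hev⟩
      rw [← hi]
      exact hnt.image (MulAction.injective _)
end

section
/- Let X be a Peano continuum without cut points, and let (G, 𝓐) be a fine pairing on X. If, for each A ∈ 𝓐, the stabilizer st(A) = {g ∈ G : g(A) = A} acts as a convergence group on X, then G acts as a convergence group on X. -/
/-! The idea is a dichotomy for a sequence `g` of distinct group elements.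

* If some `A ∈ 𝓐` has the same image `g i • A` for infinitely many `i`, then along those indices
  `(g i₀)⁻¹ * g i` lies in the stabilizer of `A`, and a convergence subsequence of it is translated
  by `g i₀` (`conv_of_frequently_eq`).
* Otherwise nullness forces `diam (g i • A) → 0` for every `A ∈ 𝓐` (`eventually_diam_le`). After
  passing to a subsequence, the images of one member of `𝓐` shrink to a point `p`.

In the second case the absence of cut points gives the key fact (`exists_small_component`): if
`E` lies close enough to `p`, then all components of `Eᶜ` except possibly one lie in a prescribed
ball around `p`. Hence shrinking to `p` propagates along crossings (`shrinks_of_crosses`), so by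
cross-connectedness all members of `𝓐` shrink to `p`. By fineness any two points `x ≠ y` have
neighbourhoods `U`, `V` (components of the complement of a finite union of members of `𝓐`) such
that for large `i` one of `g i • U`, `g i • V` is close to `p` (`dichotomy`). If some point `x` has
no neighbourhood carried to `p`, a subsequence witnesses this, and along it every other point
does have such a neighbourhood; compactness then gives convergence with repeller `x` and
attractor `p` (`conv_of_dichotomy`). -/

open Set Filter Topology Pointwise

/-- At most one component of the complement of a set close to `p` leaves a given ball around `p`.
As `p` is not a cut point, `{p}ᶜ` is the increasing union of the components `W n` of a fixed point
in the complements of shrinking closed balls around `p`; by compactness a single `W n` contains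
the complement of the given ball, so all components leaving that ball contain `W n`. -/
lemma exists_small_component {X : Type*} [MetricSpace X] [CompactSpace X]
    [LocallyConnectedSpace X] (hcut : ∀ x : X, IsPreconnected ({x}ᶜ : Set X))
    (p : X) {ε : ℝ} (hε : 0 < ε) :
    ∃ δ > 0, ∀ E : Set X, E ⊆ Metric.closedBall p δ → ∀ x y : X, SepPts E x y →
      connectedComponentIn Eᶜ x ⊆ Metric.ball p ε ∨
      connectedComponentIn Eᶜ y ⊆ Metric.ball p ε := by
  rcases (Metric.ball p ε)ᶜ.eq_empty_or_nonempty with hK | ⟨q, hq⟩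
  · refine ⟨1, one_pos, fun E _ x y _ => Or.inl ?_⟩
    rw [compl_empty_iff] at hK
    rw [hK]; exact subset_univ _
  have hqp : q ≠ p := by
    rintro rfl
    exact hq (Metric.mem_ball_self hε)
  set r : ℕ → ℝ := fun n => 1 / ((n : ℝ) + 1) with hr
  have hrpos : ∀ n, 0 < r n := fun n => Nat.one_div_pos_of_nat
  have hranti : ∀ m n, m ≤ n → r n ≤ r m := fun m n h => Nat.one_div_le_one_div h
  have hrsmall : ∀ z : X, z ≠ p → ∃ n, r n < dist z p := fun z hz =>
    exists_nat_one_div_lt (dist_pos.2 hz)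
  set W : ℕ → Set X := fun n => connectedComponentIn (Metric.closedBall p (r n))ᶜ q with hW
  have hWopen : ∀ n, IsOpen (W n) := fun n =>
    Metric.isClosed_closedBall.isOpen_compl.connectedComponentIn
  have hWmono : Monotone W := fun m n h =>
    connectedComponentIn_mono _ (compl_subset_compl.2 (Metric.closedBall_subset_closedBall
      (hranti m n h)))
  have hcover : ({p}ᶜ : Set X) ⊆ ⋃ n, W n := by
    refine (hcut p).subset_of_closure_inter_subset (isOpen_iUnion hWopen) ?_ ?_
    · obtain ⟨n, hn⟩ := hrsmall q hqp
      refine ⟨q, hqp, mem_iUnion.2 ⟨n, mem_connectedComponentIn ?_⟩⟩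
      simpa using hn
    · rintro z ⟨hz, hzp⟩
      obtain ⟨n, hn⟩ := hrsmall z hzp
      have hzn : z ∈ (Metric.closedBall p (r n))ᶜ := by simpa using hn
      have hop : IsOpen (connectedComponentIn (Metric.closedBall p (r n))ᶜ z) :=
        Metric.isClosed_closedBall.isOpen_compl.connectedComponentIn
      obtain ⟨w, hw1, hw2⟩ := mem_closure_iff.1 hz _ hop (mem_connectedComponentIn hzn)
      obtain ⟨m, hm⟩ := mem_iUnion.1 hw2
      -- outside the smaller of the two balls, `w` joins the component of `z` to that of `q`
      have h1 : w ∈ W (max m n) := hWmono (le_max_left m n) hm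
      have h2 : w ∈ connectedComponentIn (Metric.closedBall p (r (max m n)))ᶜ z :=
        connectedComponentIn_mono _ (compl_subset_compl.2 (Metric.closedBall_subset_closedBall
          (hranti n _ (le_max_right m n)))) hw1
      have hzk : z ∈ (Metric.closedBall p (r (max m n)))ᶜ :=
        compl_subset_compl.2 (Metric.closedBall_subset_closedBall
          (hranti n _ (le_max_right m n))) hzn
      refine mem_iUnion.2 ⟨max m n, ?_⟩
      have h3 := connectedComponentIn_eq h1
      have h4 := connectedComponentIn_eq h2
      show z ∈ connectedComponentIn _ q
      rw [h3, ← h4]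
      exact mem_connectedComponentIn hzk
  have hKc : IsCompact (Metric.ball p ε)ᶜ := Metric.isOpen_ball.isClosed_compl.isCompact
  obtain ⟨n, hn⟩ := hKc.elim_directed_cover W hWopen
    (fun z hz => hcover (by rintro rfl; exact hz (Metric.mem_ball_self hε)))
    hWmono.directed_le
  refine ⟨r n, hrpos n, fun E hE x y hxy => ?_⟩
  by_contra! hcon
  obtain ⟨hx, hy⟩ := hcon
  obtain ⟨u, hu, hu'⟩ := not_subset.1 hx
  obtain ⟨v, hv, hv'⟩ := not_subset.1 hy
  have hsub : W n ⊆ Eᶜ :=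
    (connectedComponentIn_subset _ _).trans (compl_subset_compl.2 hE)
  have huv : v ∈ connectedComponentIn Eᶜ u :=
    isPreconnected_connectedComponentIn.subset_connectedComponentIn (hn hu') hsub (hn hv')
  apply hxy.2.2
  rw [connectedComponentIn_eq hu, connectedComponentIn_eq hv, connectedComponentIn_eq huv]

lemma smul_connectedComponentIn {G X : Type*} [Group G] [MulAction G X] [TopologicalSpace X]
    [ContinuousConstSMul G X] (g : G) (E : Set X) (x : X) (hx : x ∉ E) :
    g • connectedComponentIn Eᶜ x = connectedComponentIn (g • E)ᶜ (g • x) := by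
  have h := (Homeomorph.smul g : X ≃ₜ X).image_connectedComponentIn (s := Eᶜ) (x := x) hx
  have h2 : (Homeomorph.smul g : X ≃ₜ X) '' Eᶜ = (g • E)ᶜ := by
    rw [← smul_set_compl]; rfl
  rw [h2] at h
  exact h

lemma SepPts.smul {G X : Type*} [Group G] [MulAction G X] [TopologicalSpace X]
    [ContinuousConstSMul G X] (g : G) {E : Set X} {x y : X} (h : SepPts E x y) :
    SepPts (g • E) (g • x) (g • y) := by
  refine ⟨fun hx => h.1 (smul_mem_smul_set_iff.1 hx), fun hy => h.2.1 (smul_mem_smul_set_iff.1 hy),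
    fun he => h.2.2 ?_⟩
  rw [← smul_connectedComponentIn g E x h.1, ← smul_connectedComponentIn g E y h.2.1] at he
  exact smul_left_cancel g he

/-- The translates `g i • A` shrink to the point `p`: they are eventually contained in every ball
around `p`. -/
def Shrinks {G X : Type*} [Group G] [MulAction G X] [MetricSpace X]
    (g : ℕ → G) (p : X) (A : Set X) : Prop :=
  ∀ ε : ℝ, 0 < ε → ∀ᶠ i in atTop, g i • A ⊆ Metric.ball p ε

lemma eventually_diam_le {G X : Type*} [Group G] [MulAction G X] [MetricSpace X]
    {𝓐 : Set (Set X)} (hinv : ∀ g : G, ∀ A ∈ 𝓐, g • A ∈ 𝓐) (hnull : NullFam 𝓐)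
    {g : ℕ → G} {A : Set X} (hA : A ∈ 𝓐)
    (hne : ∀ B : Set X, ∀ᶠ i in atTop, g i • A ≠ B) {ε : ℝ} (hε : 0 < ε) :
    ∀ᶠ i in atTop, Metric.diam (g i • A) ≤ ε := by
  have h := ((hnull ε hε).eventually_all (l := atTop)
    (p := fun B i => g i • A ≠ B)).2 (fun B _ => hne B)
  filter_upwards [h] with i hi
  by_contra! hlt
  exact hi _ ⟨hinv _ _ hA, hlt⟩ rfl

/-- A set of small diameter meeting a small ball around `p` lies in a slightly larger ball. -/
lemma shrinks_of_meets {G X : Type*} [Group G] [MulAction G X] [MetricSpace X] [CompactSpace X]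
    {g : ℕ → G} {p : X} {B : Set X}
    (hdiam : ∀ ε : ℝ, 0 < ε → ∀ᶠ i in atTop, Metric.diam (g i • B) ≤ ε)
    (hmeet : ∀ ε : ℝ, 0 < ε → ∀ᶠ i in atTop, (g i • B ∩ Metric.ball p ε).Nonempty) :
    Shrinks g p B := by
  intro ε hε
  filter_upwards [hdiam (ε / 2) (half_pos hε), hmeet (ε / 2) (half_pos hε)] with i h1 h2
  obtain ⟨b, hb, hbp⟩ := h2
  intro z hz
  have h3 : dist z b ≤ Metric.diam (g i • B) :=
    Metric.dist_le_diam_of_mem (Metric.isBounded_of_compactSpace) hz hb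
  have h4 := dist_triangle z b p
  rw [Metric.mem_ball] at *
  linarith

/-- Shrinking to `p` passes from `A` to any `B` that crosses `A` and whose translates have
diameters tending to zero: if `A` separates two points of `B`, one of the two components lies near
`p`, so the translates of `B` come near `p`. -/
lemma shrinks_of_crosses {G X : Type*} [Group G] [MulAction G X] [MetricSpace X] [CompactSpace X]
    [LocallyConnectedSpace X] [ContinuousConstSMul G X]
    (hcut : ∀ x : X, IsPreconnected ({x}ᶜ : Set X))
    {g : ℕ → G} {p : X} {A B : Set X} (hA : Shrinks g p A)
    (hdiam : ∀ ε : ℝ, 0 < ε → ∀ᶠ i in atTop, Metric.diam (g i • B) ≤ ε)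
    (hAB : Crosses A B) : Shrinks g p B := by
  refine shrinks_of_meets hdiam fun ε hε => ?_
  rcases hAB with ⟨z, hzA, hzB⟩ | ⟨⟨hBA, x, hx, y, hy, hxy⟩, -⟩
  · filter_upwards [hA ε hε] with i hi
    exact ⟨g i • z, smul_mem_smul_set hzB, hi (smul_mem_smul_set hzA)⟩
  · obtain ⟨δ, hδ, hE⟩ := exists_small_component hcut p hε
    have hsep : SepPts A x y := ⟨hBA hx, hBA hy, hxy⟩
    filter_upwards [hA δ hδ] with i hi
    have hs := hsep.smul (g i)
    rcases hE _ (hi.trans Metric.ball_subset_closedBall) _ _ hs with h | h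
    · exact ⟨g i • x, smul_mem_smul_set hx, h (mem_connectedComponentIn hs.1)⟩
    · exact ⟨g i • y, smul_mem_smul_set hy, h (mem_connectedComponentIn hs.2.1)⟩

/-- If every member of a fine family shrinks to `p`, then any two distinct points have
neighbourhoods at least one of which is, at each late time, carried near `p`. -/
lemma dichotomy {G X : Type*} [Group G] [MulAction G X] [MetricSpace X] [CompactSpace X]
    [LocallyConnectedSpace X] [ContinuousConstSMul G X]
    (hcut : ∀ x : X, IsPreconnected ({x}ᶜ : Set X)) {𝓐 : Set (Set X)}
    (hclosed : ∀ A ∈ 𝓐, IsClosed A) (hfine : FineFam 𝓐) {g : ℕ → G} {p : X}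
    (hshr : ∀ A ∈ 𝓐, Shrinks g p A) (x y : X) (hxy : x ≠ y) :
    ∃ U ∈ 𝓝 x, ∃ V ∈ 𝓝 y, ∀ ε : ℝ, 0 < ε → ∀ᶠ i in atTop,
      g i • U ⊆ Metric.ball p ε ∨ g i • V ⊆ Metric.ball p ε := by
  obtain ⟨𝓑, h𝓑, hfin, hsep⟩ := hfine x y hxy
  have hcl : IsClosed (⋃₀ 𝓑) := by
    rw [sUnion_eq_biUnion]
    exact hfin.isClosed_biUnion fun B hB => hclosed B (h𝓑 hB)
  refine ⟨_, hcl.isOpen_compl.connectedComponentIn.mem_nhds (mem_connectedComponentIn hsep.1),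
    _, hcl.isOpen_compl.connectedComponentIn.mem_nhds (mem_connectedComponentIn hsep.2.1),
    fun ε hε => ?_⟩
  obtain ⟨δ, hδ, hE⟩ := exists_small_component hcut p hε
  have h := (hfin.eventually_all (l := atTop)
    (p := fun B i => g i • B ⊆ Metric.ball p δ)).2 (fun B hB => hshr B (h𝓑 hB) δ hδ)
  filter_upwards [h] with i hi
  have hsub : g i • ⋃₀ 𝓑 ⊆ Metric.closedBall p δ := by
    rintro _ ⟨z, ⟨B, hB, hz⟩, rfl⟩
    exact Metric.ball_subset_closedBall (hi B hB (smul_mem_smul_set hz))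
  rw [smul_connectedComponentIn _ _ _ hsep.1, smul_connectedComponentIn _ _ _ hsep.2.1]
  exact hE _ hsub _ _ (hsep.smul (g i))

/-- Uniform convergence to `p` near each point other than `n` gives, by compactness, uniform
convergence on compact sets missing `n`. -/
lemma convSeqOn_of_local {G X : Type*} [Group G] [MulAction G X] [MetricSpace X]
    {g : ℕ → G} {n p : X}
    (h : ∀ y, y ≠ n → ∀ ε : ℝ, 0 < ε → ∃ V ∈ 𝓝 y, ∀ᶠ i in atTop, g i • V ⊆ Metric.ball p ε) :
    ConvSeqOn (Set.univ : Set X) (fun i => (g i • · : X → X)) n p := by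
  refine ⟨mem_univ _, mem_univ _, fun C _ hC hn U hU hp => ?_⟩
  obtain ⟨ε, hε, hball⟩ := Metric.isOpen_iff.1 hU p hp
  refine hC.induction_on (p := fun C => ∀ᶠ i in atTop, (g i • · : X → X) '' C ⊆ U) ?_ ?_ ?_ ?_
  · simp
  · intro s t hst ht
    filter_upwards [ht] with i hi using (image_mono hst).trans hi
  · intro s t hs ht
    filter_upwards [hs, ht] with i h1 h2
    rw [image_union]
    exact union_subset h1 h2
  · intro y hy
    obtain ⟨V, hV, hi⟩ := h y (by rintro rfl; exact hn hy) ε hε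
    refine ⟨V, mem_nhdsWithin_of_mem_nhds hV, ?_⟩
    filter_upwards [hi] with i hi using hi.trans hball

lemma conv_of_dichotomy {G X : Type*} [Group G] [MulAction G X] [MetricSpace X]
    {g : ℕ → G} {p : X}
    (hdich : ∀ x y : X, x ≠ y → ∃ U ∈ 𝓝 x, ∃ V ∈ 𝓝 y, ∀ ε : ℝ, 0 < ε → ∀ᶠ i in atTop,
      g i • U ⊆ Metric.ball p ε ∨ g i • V ⊆ Metric.ball p ε) :
    ∃ k : ℕ → ℕ, StrictMono k ∧ ∃ n p : X,
      ConvSeqOn (Set.univ : Set X) (fun i => (g (k i) • · : X → X)) n p := by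
  by_cases hgood : ∀ y : X, ∀ ε : ℝ, 0 < ε → ∃ V ∈ 𝓝 y, ∀ᶠ i in atTop, g i • V ⊆ Metric.ball p ε
  · exact ⟨id, strictMono_id, p, p, convSeqOn_of_local fun y _ => hgood y⟩
  push Not at hgood
  obtain ⟨x, ε, hε, hbad⟩ := hgood
  obtain ⟨k, hk, hkb⟩ := extraction_forall_of_frequently
    (P := fun n i => ¬ g i • Metric.ball x (1 / ((n : ℝ) + 1)) ⊆ Metric.ball p ε)
    (fun n => hbad _ (Metric.ball_mem_nhds x Nat.one_div_pos_of_nat))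
  refine ⟨k, hk, x, p, convSeqOn_of_local (g := fun i => g (k i)) fun y hy ε' hε' => ?_⟩
  obtain ⟨U, hU, V, hV, hUV⟩ := hdich x y hy.symm
  refine ⟨V, hV, ?_⟩
  obtain ⟨η, hη, hηU⟩ := Metric.mem_nhds_iff.1 hU
  obtain ⟨N, hN⟩ := exists_nat_one_div_lt hη
  filter_upwards [hk.tendsto_atTop.eventually (hUV (min ε ε') (lt_min hε hε')),
    eventually_ge_atTop N] with i hi hiN
  rcases hi with hi | hi
  · refine absurd ?_ (hkb i)
    have h1 : (1 : ℝ) / ((i : ℝ) + 1) ≤ η := (Nat.one_div_le_one_div hiN).trans hN.le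
    exact (smul_set_mono ((Metric.ball_subset_ball h1).trans hηU)).trans
      (hi.trans (Metric.ball_subset_ball (min_le_left _ _)))
  · exact hi.trans (Metric.ball_subset_ball (min_le_right _ _))

lemma conv_of_frequently_eq {G X : Type*} [Group G] [MulAction G X] [MetricSpace X]
    [ContinuousConstSMul G X] {A : Set X} (hstab : ConvGroupOn (stab G A) (Set.univ : Set X))
    {g : ℕ → G} (hg : Function.Injective g) {B : Set X} (hB : ∃ᶠ i in atTop, g i • A = B) :
    ∃ k : ℕ → ℕ, StrictMono k ∧ ∃ n p : X,
      ConvSeqOn (Set.univ : Set X) (fun i => (g (k i) • · : X → X)) n p := by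
  obtain ⟨φ, hφ, hφB⟩ := extraction_of_frequently_atTop hB
  obtain ⟨k, hk, n, p, -, -, hc⟩ := hstab (fun i => (g (φ 0))⁻¹ * g (φ i))
    (fun i => by
      show ((g (φ 0))⁻¹ * g (φ i)) • A = A
      rw [mul_smul, hφB i, ← hφB 0, inv_smul_smul])
    (fun i j hij => hφ.injective (hg (mul_left_cancel hij)))
  refine ⟨φ ∘ k, hφ.comp hk, n, g (φ 0) • p, mem_univ _, mem_univ _, fun C hC hCc hn U hU hp => ?_⟩
  filter_upwards [hc C hC hCc hn ((g (φ 0) • · : X → X) ⁻¹' U)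
    (hU.preimage (continuous_const_smul _)) hp] with i hi
  rintro _ ⟨z, hz, rfl⟩
  have := hi ⟨z, hz, rfl⟩
  simpa [mul_smul] using this


/-- Theorem (Swenson, main result of [SWE2]): if `(G, 𝓐)` is a fine pairing on a Peano
continuum `X` without cut points and each stabilizer acts as a convergence group on `X`,
then `G` acts as a convergence group on `X`. -/
theorem fine_pairing_convergence {G X : Type*} [Group G] [MulAction G X]
    [MetricSpace X] [CompactSpace X] [ConnectedSpace X] [LocallyConnectedSpace X]
    [ContinuousConstSMul G X]
    (hcut : ∀ x : X, IsPreconnected ({x}ᶜ : Set X))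
    (𝓐 : Set (Set X))
    (hclosed : ∀ A ∈ 𝓐, IsClosed A)
    (hinv : ∀ g : G, ∀ A ∈ 𝓐, g • A ∈ 𝓐)
    (hcross : CrossConnected 𝓐)
    (hnull : NullFam 𝓐) (hfine : FineFam 𝓐)
    (hstab : ∀ A ∈ 𝓐, ConvGroupOn (stab G A) (Set.univ : Set X)) :
    ConvGroupOn (Set.univ : Set G) (Set.univ : Set X) := by
  rcases subsingleton_or_nontrivial X with hX | hX
  · intro g _ _
    obtain ⟨x⟩ : Nonempty X := inferInstance
    refine ⟨id, strictMono_id, x, x, mem_univ _, mem_univ _, fun C _ _ hx U _ hxU => ?_⟩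
    exact Eventually.of_forall fun i z _ => (Subsingleton.elim x z) ▸ hxU
  -- a nonempty member of `𝓐` exists, since otherwise no two points could be separated
  obtain ⟨A₀, hA₀, a, ha⟩ : ∃ A ∈ 𝓐, A.Nonempty := by
    obtain ⟨x, y, hxy⟩ := exists_pair_ne X
    obtain ⟨𝓑, h𝓑, -, hsep⟩ := hfine x y hxy
    by_contra! hemp
    have hE : ⋃₀ 𝓑 = ∅ := sUnion_eq_empty.2 fun B hB => hemp B (h𝓑 hB)
    apply hsep.2.2
    rw [hE, compl_empty, connectedComponentIn_univ, connectedComponentIn_univ,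
      PreconnectedSpace.connectedComponent_eq_univ, PreconnectedSpace.connectedComponent_eq_univ]
  intro g _ hg
  by_cases hfreq : ∃ A ∈ 𝓐, ∃ B : Set X, ∃ᶠ i in atTop, g i • A = B
  · obtain ⟨A, hA, B, hB⟩ := hfreq
    exact conv_of_frequently_eq (hstab A hA) hg hB
  push Not at hfreq
  obtain ⟨p, φ, hφ, hp⟩ := CompactSpace.tendsto_subseq (fun i => g i • a)
  have hdiam : ∀ A ∈ 𝓐, ∀ ε : ℝ, 0 < ε →
      ∀ᶠ i in atTop, Metric.diam ((g (φ i)) • A) ≤ ε := fun A hA ε hε =>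
    eventually_diam_le (g := fun i => g (φ i)) hinv hnull hA
      (fun B => hφ.tendsto_atTop.eventually (hfreq A hA B)) hε
  have h₀ : Shrinks (fun i => g (φ i)) p A₀ :=
    shrinks_of_meets (hdiam A₀ hA₀) fun ε hε => by
      filter_upwards [hp.eventually (Metric.ball_mem_nhds p hε)] with i hi
      exact ⟨_, smul_mem_smul_set ha, hi⟩
  have hshr : ∀ A ∈ 𝓐, Shrinks (fun i => g (φ i)) p A := by
    intro A hA
    obtain ⟨n, c, hc0, hcn, hc, hcr⟩ := hcross A₀ hA₀ A hA
    have hstep : ∀ m ≤ n, Shrinks (fun i => g (φ i)) p (c m) := by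
      intro m
      induction m with
      | zero => intro _; rwa [hc0]
      | succ m ih =>
        intro hm
        exact shrinks_of_crosses hcut (ih (by omega)) (hdiam _ (hc _ hm)) (hcr m (by omega))
    exact hcn ▸ hstep n le_rfl
  obtain ⟨k, hk, n, q, h⟩ := conv_of_dichotomy
    (dichotomy hcut hclosed hfine hshr)
  exact ⟨φ ∘ k, hφ.comp hk, n, q, h⟩
end

section
/- If (G, 𝓐) is a local convergence pairing on a Peano continuum X without cut points, then G acts as a convergence group on X. -/
/-!
Fix an injective sequence `g` in `G` and a nonprincipal ultrafilter `𝒰` on `ℕ`. By nullity and the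
stabilizer condition, each `A ∈ 𝓐` has an attractor `p` along `𝒰` (`exists_attr`): either
`g i • A` is eventually a fixed set `A'` and `g i` converges to `p ∈ A'` on `A` away from a repeller
`n ∈ A` (type I, a notion symmetric under inversion by `TI.dual`), or `g i • A` shrinks to `p`
(type II).

The heart of the proof is that all members of `𝓐` have the same attractor (`attr_eq`). Crossing
sets with different attractors must meet (`inter_of_cross`), and they meet only in the repeller of
one of them (`bad_point`). Fineness shows that, for `p ≠ q`, the common points of sets
attracted near `p` and sets attracted near `q` lie in a finite set (`bad_points_finite`). If two
attractors differed, then some type I set `A`, with attractor `p`, would have its repeller in a set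
`B` with another attractor. The last condition on a pairing provides a crossing sequence from `A`
to `B` avoiding both the repeller of `A` and the eventual value of `(g i)⁻¹ • p`. Its first term
that does not shrink to `p` is of type I with a new repeller, and finiteness, applied to the inverse
sequence and to the translates of the terms by `g i`, yields a point of an intermediate term which
`g i` eventually maps to `p`. This contradicts the choice of the sequence (`chain_contra`).

Hence there is a common attractor `p` and, for the inverse sequence, a common attractor `n`.
Fineness and the absence of cut points then give convergence to `p` on all of `X` away from `n`
along `𝒰` (`exists_limit_pair`), and countable neighbourhood bases at `n` and `p` turn this into a
convergence subsequence.
-/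

open Set Filter Topology Pointwise

section Aux

variable {G X : Type*} [Group G] [MulAction G X]

/-- Type I behaviour of `A` along the ultrafilter `𝒰`: the translates `g i • A` are eventually
equal to `A'`, and on `A` the `g i` converge to the attractor `p ∈ A'`, uniformly away from the
repeller `n ∈ A`. -/
def TI [TopologicalSpace X] (𝒰 : Ultrafilter ℕ) (g : ℕ → G) (A A' : Set X) (n p : X) : Prop :=
  n ∈ A ∧ p ∈ A' ∧ (∀ᶠ i in 𝒰, g i • A = A') ∧
    ∀ U V : Set X, IsOpen U → n ∈ U → IsOpen V → p ∈ V →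
      ∀ᶠ i in 𝒰, ∀ x ∈ A, x ∈ U ∨ g i • x ∈ V

/-- Type II behaviour of `A` along the ultrafilter `𝒰`: the translates `g i • A` shrink to the
point `p`. -/
def TII [TopologicalSpace X] (𝒰 : Ultrafilter ℕ) (g : ℕ → G) (A : Set X) (p : X) : Prop :=
  ∀ V : Set X, IsOpen V → p ∈ V → ∀ᶠ i in 𝒰, ∀ x ∈ A, g i • x ∈ V

/-- The point `p` is the attractor of `A` along `𝒰`, with `A` of either type. -/
def Attr [TopologicalSpace X] (𝒰 : Ultrafilter ℕ) (g : ℕ → G) (A : Set X) (p : X) : Prop :=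
  TII 𝒰 g A p ∨ ∃ A' n, TI 𝒰 g A A' n p

/-! ### Topological preliminaries -/

theorem same_comp [TopologicalSpace X] {K F : Set X} (hK : IsPreconnected K) (hKF : K ⊆ F)
    {x y : X} (hx : x ∈ K) (hy : y ∈ K) :
    connectedComponentIn F x = connectedComponentIn F y :=
  connectedComponentIn_eq (hK.subset_connectedComponentIn hx hKF hy)

theorem exists_conn_nhd [TopologicalSpace X] [RegularSpace X] [LocallyConnectedSpace X]
    {W : Set X} (hW : IsOpen W) {c : X} (hc : c ∈ W) :
    ∃ O, IsOpen O ∧ IsPreconnected O ∧ c ∈ O ∧ closure O ⊆ W := by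
  obtain ⟨T, hT, hTc, hTW⟩ := exists_mem_nhds_isClosed_subset (hW.mem_nhds hc)
  refine ⟨connectedComponentIn (interior T) c, isOpen_interior.connectedComponentIn,
    isPreconnected_connectedComponentIn, mem_connectedComponentIn (mem_interior_iff_mem_nhds.2 hT),
    ?_⟩
  exact (closure_minimal ((connectedComponentIn_subset _ _).trans interior_subset) hTc).trans hTW

/-- A compact subset of a connected open set `Ω` lies in a connected compact subset of `Ω`. -/
theorem exists_compact_conn [TopologicalSpace X] [T2Space X] [CompactSpace X]
    [LocallyConnectedSpace X] {Ω C : Set X} (hΩ : IsOpen Ω) (hc : IsPreconnected Ω)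
    (hC : IsCompact C) (hCΩ : C ⊆ Ω) :
    ∃ K, IsCompact K ∧ IsPreconnected K ∧ C ⊆ K ∧ K ⊆ Ω := by
  rcases Ω.eq_empty_or_nonempty with h0 | ⟨z, hz⟩
  · exact ⟨C, hC, by subst h0; rw [subset_empty_iff.1 hCΩ]; exact isPreconnected_empty, le_rfl, hCΩ⟩
  -- the points reachable from `z` by a compact connected subset of `Ω`
  let R : Set X := {x | ∃ K, IsCompact K ∧ IsPreconnected K ∧ z ∈ K ∧ x ∈ K ∧ K ⊆ Ω}
  have step : ∀ x ∈ Ω, ∃ O, IsOpen O ∧ x ∈ O ∧ ∀ y ∈ O, y ∈ R →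
      ∃ K, IsCompact K ∧ IsPreconnected K ∧ z ∈ K ∧ O ⊆ K ∧ K ⊆ Ω := by
    intro x hx
    obtain ⟨O, hO, hOc, hxO, hcl⟩ := exists_conn_nhd hΩ hx
    refine ⟨O, hO, hxO, ?_⟩
    rintro y hy ⟨K, hK, hKc, hzK, hyK, hKΩ⟩
    exact ⟨K ∪ closure O, hK.union isClosed_closure.isCompact,
      hKc.union y hyK (subset_closure hy) hOc.closure, Or.inl hzK,
      subset_closure.trans subset_union_right, union_subset hKΩ hcl⟩
  have hRΩ : Ω ⊆ R := by
    have hRo : IsOpen (R ∩ Ω) := by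
      rw [isOpen_iff_forall_mem_open]
      rintro x ⟨hxR, hx⟩
      obtain ⟨O, hO, hxO, hs⟩ := step x hx
      obtain ⟨K, h1, h2, h3, h4, h5⟩ := hs x hxO hxR
      exact ⟨O, fun y hy => ⟨⟨K, h1, h2, h3, h4 hy, h5⟩, h5 (h4 hy)⟩, hO, hxO⟩
    have hRo' : IsOpen (Ω \ R) := by
      rw [isOpen_iff_forall_mem_open]
      rintro x ⟨hx, hxR⟩
      obtain ⟨O, hO, hxO, hs⟩ := step x hx
      refine ⟨O ∩ Ω, ?_, hO.inter hΩ, hxO, hx⟩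
      rintro y ⟨hy, hyΩ⟩
      refine ⟨hyΩ, fun hyR => hxR ?_⟩
      obtain ⟨K, h1, h2, h3, h4, h5⟩ := hs y hy hyR
      exact ⟨K, h1, h2, h3, h4 hxO, h5⟩
    intro x hx
    by_contra hxR
    obtain ⟨w, -, hw1, hw2⟩ := hc (R ∩ Ω) (Ω \ R) hRo hRo'
      (fun y hy => by by_cases hyR : y ∈ R <;> simp [hy, hyR])
      ⟨z, hz, ⟨{z}, isCompact_singleton, isPreconnected_singleton, rfl, rfl, by simpa using hz⟩, hz⟩
      ⟨x, hx, hx, hxR⟩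
    exact hw2.2 hw1.1
  obtain ⟨K, h1, h2, h3, h4, h5⟩ : ∃ K, IsCompact K ∧ IsPreconnected K ∧ z ∈ K ∧ C ⊆ K ∧ K ⊆ Ω := by
    refine hC.induction_on (p := fun C => ∃ K, IsCompact K ∧ IsPreconnected K ∧ z ∈ K ∧ C ⊆ K ∧ K ⊆ Ω)
      ⟨{z}, isCompact_singleton, isPreconnected_singleton, rfl, by simp, by simpa using hz⟩
      ?_ ?_ ?_
    · rintro s t hst ⟨K, h1, h2, h3, h4, h5⟩
      exact ⟨K, h1, h2, h3, hst.trans h4, h5⟩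
    · rintro s t ⟨K, h1, h2, h3, h4, h5⟩ ⟨K', h1', h2', h3', h4', h5'⟩
      exact ⟨K ∪ K', h1.union h1', h2.union z h3 h3' h2', Or.inl h3, union_subset_union h4 h4',
        union_subset h5 h5'⟩
    · intro x hx
      obtain ⟨O, hO, hxO, hs⟩ := step x (hCΩ hx)
      exact ⟨O, mem_nhdsWithin_of_mem_nhds (hO.mem_nhds hxO), hs x hxO (hRΩ (hCΩ hx))⟩
  exact ⟨K, h1, h2, h4, h5⟩

theorem smul_preconn [TopologicalSpace X] [ContinuousConstSMul G X] (g : G) {K : Set X}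
    (hK : IsPreconnected K) : IsPreconnected (g • K) :=
  hK.image _ (continuous_const_smul g).continuousOn

theorem SepSet.smul [TopologicalSpace X] [ContinuousConstSMul G X] (g : G) {A B : Set X}
    (hs : SepSet A B) : SepSet (g • A) (g • B) := by
  obtain ⟨h1, x, hx, y, hy, hne⟩ := hs
  have hsub : g • B ⊆ (g • A)ᶜ := by
    rintro _ ⟨b, hb, rfl⟩ hb'
    exact h1 hb (Set.smul_mem_smul_set_iff.1 hb')
  refine ⟨hsub, g • x, Set.smul_mem_smul_set hx, g • y, Set.smul_mem_smul_set hy, fun heq => hne ?_⟩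
  have hy' : g • y ∈ connectedComponentIn (g • A)ᶜ (g • x) := by
    rw [heq]; exact mem_connectedComponentIn (hsub (Set.smul_mem_smul_set hy))
  refine same_comp (K := g⁻¹ • connectedComponentIn (g • A)ᶜ (g • x))
    (smul_preconn _ isPreconnected_connectedComponentIn) ?_ ?_ ?_
  · intro w hw hwA
    rw [Set.mem_inv_smul_set_iff] at hw
    exact connectedComponentIn_subset _ _ hw (Set.smul_mem_smul_set hwA)
  · rw [Set.mem_inv_smul_set_iff]
    exact mem_connectedComponentIn (hsub (Set.smul_mem_smul_set hx))
  · rwa [Set.mem_inv_smul_set_iff]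

theorem Crosses.smul [TopologicalSpace X] [ContinuousConstSMul G X] (g : G) {A B : Set X}
    (hs : Crosses A B) : Crosses (g • A) (g • B) := by
  rcases hs with ⟨x, hxA, hxB⟩ | ⟨h1, h2⟩
  · exact Or.inl ⟨g • x, Set.smul_mem_smul_set hxA, Set.smul_mem_smul_set hxB⟩
  · exact Or.inr ⟨h1.smul g, h2.smul g⟩

theorem Crosses.symm [TopologicalSpace X] {A B : Set X} (hs : Crosses A B) : Crosses B A := by
  rcases hs with h | h
  · exact Or.inl (by rwa [inter_comm])
  · exact Or.inr h.symm

/-- An ultrafilter that eventually sees a function in a finite set sees it constant. -/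
theorem eventually_eq_of_finite {α : Type*} (𝒰 : Ultrafilter ℕ) {f : ℕ → α} {S : Set α}
    (hS : S.Finite) (hf : ∀ᶠ i in 𝒰, f i ∈ S) : ∃ a ∈ S, ∀ᶠ i in 𝒰, f i = a := by
  have : S ∈ 𝒰.map f := hf
  obtain ⟨a, ha, h⟩ := (Ultrafilter.eq_pure_of_finite_mem hS this)
  refine ⟨a, ha, ?_⟩
  have : {a} ∈ 𝒰.map f := by rw [h]; simp
  exact this

theorem exists_lim [TopologicalSpace X] [CompactSpace X] (𝒰 : Ultrafilter ℕ) (f : ℕ → X) :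
    ∃ y, Tendsto f 𝒰 (𝓝 y) := by
  obtain ⟨y, -, hy⟩ := isCompact_univ.ultrafilter_le_nhds (𝒰.map f) (by simp)
  exact ⟨y, hy⟩

/-! ### The two types of behaviour -/

theorem TI.dual [TopologicalSpace X] {𝒰 : Ultrafilter ℕ} {g : ℕ → G} {A A' : Set X} {n p : X}
    (hT : TI 𝒰 g A A' n p) : TI 𝒰 (fun i => (g i)⁻¹) A' A p n := by
  obtain ⟨h1, h2, h3, h4⟩ := hT
  refine ⟨h2, h1, ?_, ?_⟩
  · filter_upwards [h3] with i hi
    rw [← hi, inv_smul_smul]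
  · intro U V hU hpU hV hnV
    filter_upwards [h3, h4 V U hV hnV hU hpU] with i hi hi2 x hx
    rw [← hi, Set.mem_smul_set_iff_inv_smul_mem] at hx
    rcases hi2 _ hx with h | h
    · exact Or.inr h
    · left; simpa using h

theorem TI.dual' [TopologicalSpace X] {𝒰 : Ultrafilter ℕ} {g : ℕ → G} {A A' : Set X} {n p : X}
    (hT : TI 𝒰 (fun i => (g i)⁻¹) A A' n p) : TI 𝒰 g A' A p n := by
  simpa using hT.dual

theorem TI.tendsto [TopologicalSpace X] [T1Space X] {𝒰 : Ultrafilter ℕ} {g : ℕ → G}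
    {A A' : Set X} {n p : X} (hT : TI 𝒰 g A A' n p) {x : X} (hx : x ∈ A) (hn : x ≠ n) :
    Tendsto (fun i => g i • x) 𝒰 (𝓝 p) := by
  rw [tendsto_nhds]
  intro V hV hp
  filter_upwards [hT.2.2.2 {x}ᶜ V isOpen_compl_singleton (by simpa using hn.symm) hV hp] with i hi
  simpa using hi x hx

theorem TII.tendsto [TopologicalSpace X] {𝒰 : Ultrafilter ℕ} {g : ℕ → G}
    {A : Set X} {p : X} (hT : TII 𝒰 g A p) {e : ℕ → X} (he : ∀ᶠ i in 𝒰, e i ∈ A) :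
    Tendsto (fun i => g i • e i) 𝒰 (𝓝 p) := by
  rw [tendsto_nhds]
  intro V hV hp
  filter_upwards [hT V hV hp, he] with i hi h2
  exact hi _ h2

theorem exists_not_two {A : Set X} (hA : 2 < A.encard) (a b : X) :
    ∃ x ∈ A, x ≠ a ∧ x ≠ b := by
  by_contra! hcon
  have : A ⊆ {a, b} := fun x hx => by
    by_cases hxa : x = a
    · simp [hxa]
    · simp [hcon x hx hxa]
  exact absurd ((encard_le_encard this).trans ((encard_insert_le {b} a).trans
    (by rw [encard_singleton, one_add_one_eq_two]))) (not_le.2 hA)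

theorem Attr.exists_tendsto [TopologicalSpace X] [T1Space X] {𝒰 : Ultrafilter ℕ} {g : ℕ → G}
    {A : Set X} {p : X} (hA : Attr 𝒰 g A p) :
    ∃ n, ∀ x ∈ A, x ≠ n → Tendsto (fun i => g i • x) 𝒰 (𝓝 p) := by
  rcases hA with h | ⟨A', n, h⟩
  · exact ⟨p, fun x hx _ => h.tendsto (Eventually.of_forall fun _ => hx)⟩
  · exact ⟨n, fun x hx hn => h.tendsto hx hn⟩

theorem Attr.unique [TopologicalSpace X] [T2Space X] {𝒰 : Ultrafilter ℕ} {g : ℕ → G}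
    {A : Set X} {p q : X} (hA : 2 < A.encard) (hp : Attr 𝒰 g A p) (hq : Attr 𝒰 g A q) :
    p = q := by
  obtain ⟨n, hn⟩ := hp.exists_tendsto
  obtain ⟨m, hm⟩ := hq.exists_tendsto
  obtain ⟨x, hx, h1, h2⟩ := exists_not_two hA n m
  exact tendsto_nhds_unique (hn x hx h1) (hm x hx h2)

theorem TI.attr [TopologicalSpace X] {𝒰 : Ultrafilter ℕ} {g : ℕ → G} {A A' : Set X} {n p : X}
    (hT : TI 𝒰 g A A' n p) : Attr 𝒰 g A p := Or.inr ⟨A', n, hT⟩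

theorem big_of_eventually {𝒰 : Ultrafilter ℕ} {g : ℕ → G} {A A' : Set X}
    (hA : 2 < A.encard) (h3 : ∀ᶠ i in 𝒰, g i • A = A') : 2 < A'.encard := by
  obtain ⟨i, hi⟩ := h3.exists
  rw [← hi]
  rwa [show (g i • A) = (fun x => g i • x) '' A from rfl, (MulAction.injective (g i)).encard_image]

theorem TI.target_unique [TopologicalSpace X] {𝒰 : Ultrafilter ℕ} {g : ℕ → G}
    {A A' A'' : Set X} {n p m q : X} (hT : TI 𝒰 g A A' n p) (hT' : TI 𝒰 g A A'' m q) :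
    A' = A'' := by
  obtain ⟨i, h1, h2⟩ := (hT.2.2.1.and hT'.2.2.1).exists
  exact h1.symm.trans h2

theorem TI.rep_unique [TopologicalSpace X] [T2Space X] {𝒰 : Ultrafilter ℕ} {g : ℕ → G}
    {A A' A'' : Set X} {n p m q : X} (hA : 2 < A.encard)
    (hT : TI 𝒰 g A A' n p) (hT' : TI 𝒰 g A A'' m q) : n = m := by
  obtain rfl := hT.target_unique hT'
  exact Attr.unique (big_of_eventually hA hT.2.2.1) hT.dual.attr hT'.dual.attr

theorem TI.not_TII [TopologicalSpace X] [T2Space X] {𝒰 : Ultrafilter ℕ} {g : ℕ → G}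
    {A A' : Set X} {n p q : X} (hA : 2 < A.encard)
    (hT : TI 𝒰 g A A' n p) (hT' : TII 𝒰 g A q) : False := by
  obtain ⟨y, hy, hyq, -⟩ := exists_not_two (big_of_eventually hA hT.2.2.1) q q
  obtain ⟨i, h1, h2⟩ :=
    ((hT' {y}ᶜ isOpen_compl_singleton (by simpa using hyq.symm)).and hT.2.2.1).exists
  rw [← h2] at hy
  obtain ⟨x, hx, rfl⟩ := hy
  exact h1 x hx rfl

/-- The repeller of a set of type I is an accumulation point of that set. -/
theorem TI.exists_near [TopologicalSpace X] [T2Space X] {𝒰 : Ultrafilter ℕ} {g : ℕ → G}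
    {A A' : Set X} {n p : X} (hA : 2 < A.encard)
    (hT : TI 𝒰 g A A' n p) {U : Set X} (hU : IsOpen U) (hn : n ∈ U) :
    ∃ x ∈ A, x ∈ U ∧ x ≠ n := by
  by_contra! hcon
  have hA' := big_of_eventually hA hT.2.2.1
  obtain ⟨y, hy, hyp, -⟩ := exists_not_two hA' p p
  obtain ⟨z, hz, hzp, hzy⟩ := exists_not_two hA' p y
  obtain ⟨i, h1, h2⟩ := ((hT.2.2.2 U ({y, z}ᶜ) hU hn (Set.toFinite _).isClosed.isOpen_compl
    (by simp [hyp.symm, hzp.symm])).and hT.2.2.1).exists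
  rw [← h2] at hy hz
  obtain ⟨y, hy, rfl⟩ := hy
  obtain ⟨z, hz, rfl⟩ := hz
  have key : ∀ w ∈ A, (w = y ∨ w = z) → w = n := by
    intro w hw hwyz
    rcases h1 w hw with h | h
    · exact hcon w hw h
    · exact absurd (by rcases hwyz with rfl | rfl <;> simp) h
  exact hzy (by rw [key y hy (Or.inl rfl), key z hz (Or.inr rfl)])

/-- A point of `A` near `c ∈ A` which is attracted to the attractor of `A`. -/
theorem Attr.exists_near [TopologicalSpace X] [T2Space X] {𝒰 : Ultrafilter ℕ} {g : ℕ → G}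
    {A : Set X} {p : X} (hA : 2 < A.encard) (hp : Attr 𝒰 g A p) {c : X} (hc : c ∈ A)
    {U : Set X} (hU : IsOpen U) (hcU : c ∈ U) :
    ∃ x ∈ A, x ∈ U ∧ Tendsto (fun i => g i • x) 𝒰 (𝓝 p) := by
  rcases hp with h | ⟨A', n, h⟩
  · exact ⟨c, hc, hcU, h.tendsto (Eventually.of_forall fun _ => hc)⟩
  · by_cases hcn : c = n
    · obtain ⟨x, hx, hxU, hxn⟩ := h.exists_near hA hU (hcn ▸ hcU)
      exact ⟨x, hx, hxU, h.tendsto hx hxn⟩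
    · exact ⟨c, hc, hcU, h.tendsto hc hcn⟩

/-- Every member of `𝓐` has an attractor along a nonprincipal ultrafilter. -/
theorem exists_attr [MetricSpace X] [CompactSpace X] [ContinuousConstSMul G X]
    {𝓐 : Set (Set X)} (h : IsLocalConvPairing G 𝓐) {𝒰 : Ultrafilter ℕ}
    (hU : (𝒰 : Filter ℕ) ≤ atTop) {g : ℕ → G} (hg : Function.Injective g)
    {A : Set X} (hA : A ∈ 𝓐) : ∃ p, Attr 𝒰 g A p := by
  by_cases hconst : ∃ A', ∀ᶠ i in 𝒰, g i • A = A'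
  · obtain ⟨A', hA'⟩ := hconst
    obtain ⟨i0, hi0⟩ := hA'.exists
    have hAc : IsCompact A := (h.closed A hA).isCompact
    have hAc' : IsCompact A' :=
      (h.closed A' (hi0 ▸ h.invariant _ A hA)).isCompact
    by_contra hcon
    -- compactness of `A ×ˢ A'` turns the absence of a limit pair into one index set `T ∈ 𝒰`
    -- along which no subsequence converges
    have hT : ∃ T ∈ 𝒰, ∀ k : ℕ → ℕ, (∀ m, k m ∈ T) → ∀ q ∈ A ×ˢ A',
        ¬ ∀ U V : Set X, IsOpen U → q.1 ∈ U → IsOpen V → q.2 ∈ V →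
          ∃ m, ∀ x ∈ A, x ∈ U ∨ g (k m) • x ∈ V := by
      refine (hAc.prod hAc').induction_on (p := fun s => ∃ T ∈ 𝒰, ∀ k : ℕ → ℕ, (∀ m, k m ∈ T) →
        ∀ q ∈ s, ¬ ∀ U V : Set X, IsOpen U → q.1 ∈ U → IsOpen V → q.2 ∈ V →
          ∃ m, ∀ x ∈ A, x ∈ U ∨ g (k m) • x ∈ V) ⟨univ, univ_mem, by simp⟩ ?_ ?_ ?_
      · rintro s t hst ⟨T, hT, hT2⟩
        exact ⟨T, hT, fun k hk q hq => hT2 k hk q (hst hq)⟩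
      · rintro s t ⟨T, hT, hT2⟩ ⟨T', hT', hT2'⟩
        refine ⟨T ∩ T', inter_mem hT hT', fun k hk q hq => ?_⟩
        rcases hq with hq | hq
        · exact hT2 k (fun m => (hk m).1) q hq
        · exact hT2' k (fun m => (hk m).2) q hq
      · rintro ⟨n, p⟩ ⟨hn, hp⟩
        have : ¬ TI 𝒰 g A A' n p := fun hTI => hcon ⟨p, hTI.attr⟩
        simp only [TI, not_and, not_forall] at this
        obtain ⟨U, V, hUo, hnU, hV, hpV, hnot⟩ := this hn hp hA'
        refine ⟨U ×ˢ V, mem_nhdsWithin_of_mem_nhds ((hUo.prod hV).mem_nhds ⟨hnU, hpV⟩),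
          _, Ultrafilter.eventually_not.2 hnot, fun k hk q hq hall => ?_⟩
        obtain ⟨m, hm⟩ := hall U V hUo hq.1 hV hq.2
        exact hk m hm
    obtain ⟨T, hT, hT2⟩ := hT
    have hfr : ∃ᶠ i in atTop, i ∈ T ∧ g i • A = A' :=
      ((Filter.Eventually.and hT hA').frequently).filter_mono hU
    obtain ⟨k0, hk0, hk0T⟩ := Filter.extraction_of_frequently_atTop hfr
    obtain ⟨k, hk, n, p, hn, hp, hconv⟩ := h.stabConv A hA (fun m => (g i0)⁻¹ * g (k0 m))
      (fun m => by
        change ((g i0)⁻¹ * g (k0 m)) • A = A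
        rw [mul_smul, (hk0T m).2, ← hi0, inv_smul_smul])
      (fun a b hab => hk0.injective (hg (mul_left_cancel hab)))
    refine hT2 (fun m => k0 (k m)) (fun m => (hk0T _).1) (n, g i0 • p)
      ⟨hn, by rw [← hi0]; exact Set.smul_mem_smul_set hp⟩ ?_
    intro U V hUo hnU hV hpV
    obtain ⟨m, hm⟩ := (hconv (A \ U) sdiff_subset (hAc.diff hUo) (fun hx => hx.2 hnU)
      ((g i0)⁻¹ • V) (hV.smul _) (by rw [Set.mem_inv_smul_set_iff]; exact hpV)).exists
    refine ⟨m, fun x hx => ?_⟩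
    by_cases hxU : x ∈ U
    · exact Or.inl hxU
    · right
      have := hm ⟨x, ⟨hx, hxU⟩, rfl⟩
      rw [Set.mem_inv_smul_set_iff] at this
      simpa [mul_smul] using this
  · obtain ⟨a, ha⟩ : A.Nonempty := encard_pos.1 (pos_of_gt (h.big A hA))
    obtain ⟨p, hp⟩ := exists_lim 𝒰 (fun i => g i • a)
    refine ⟨p, Or.inl fun V hV hpV => ?_⟩
    obtain ⟨ε, hε, hball⟩ := Metric.isOpen_iff.1 hV p hpV
    have hdiam : ∀ᶠ i in 𝒰, Metric.diam (g i • A) ≤ ε / 2 := by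
      by_contra hnot
      rw [← Ultrafilter.eventually_not] at hnot
      obtain ⟨A', -, hA'⟩ := eventually_eq_of_finite 𝒰 (f := fun i => g i • A)
        (h.null (ε / 2) (by positivity))
        (by filter_upwards [hnot] with i hi; exact ⟨h.invariant _ _ hA, not_le.1 hi⟩)
      exact hconst ⟨A', hA'⟩
    filter_upwards [hdiam, hp (Metric.ball_mem_nhds p (half_pos hε))] with i hi hi2 x hx
    apply hball
    have hd := Metric.dist_le_diam_of_mem (Metric.isBounded_of_compactSpace (s := g i • A))
      (Set.smul_mem_smul_set hx) (Set.smul_mem_smul_set ha)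
    have h2 : dist (g i • a) p < ε / 2 := hi2
    have := dist_triangle (g i • x) (g i • a) p
    rw [Metric.mem_ball]; linarith

/-! ### Crossing sets with different attractors -/

/-- If the translates of `B` eventually avoid a connected neighbourhood of the attractor of `A`,
then `B` does not separate `A`. -/
theorem not_sepSet [TopologicalSpace X] [T2Space X] [LocallyConnectedSpace X]
    [ContinuousConstSMul G X] {𝒰 : Ultrafilter ℕ} {g : ℕ → G}
    {A B O : Set X} {p : X} (hA : 2 < A.encard) (hB : IsClosed B)
    (hp : Attr 𝒰 g A p) (hO : IsOpen O) (hOc : IsPreconnected O) (hpO : p ∈ O)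
    (hBO : ∀ᶠ i in 𝒰, ∀ x ∈ B, g i • x ∉ O) : ¬ SepSet B A := by
  rintro ⟨hAB, x, hx, y, hy, hne⟩
  have key : ∀ x y, Tendsto (fun i => g i • x) 𝒰 (𝓝 p) → Tendsto (fun i => g i • y) 𝒰 (𝓝 p) →
      connectedComponentIn Bᶜ x = connectedComponentIn Bᶜ y := by
    intro x y hx hy
    obtain ⟨i, h1, h2, h3⟩ := ((hx.eventually (hO.mem_nhds hpO)).and
      ((hy.eventually (hO.mem_nhds hpO)).and hBO)).exists
    refine same_comp (smul_preconn (g i)⁻¹ hOc) ?_ (Set.mem_inv_smul_set_iff.2 h1)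
      (Set.mem_inv_smul_set_iff.2 h2)
    intro w hw hwB
    exact h3 w hwB (Set.mem_inv_smul_set_iff.1 hw)
  have near : ∀ x ∈ A, ∃ x', Tendsto (fun i => g i • x') 𝒰 (𝓝 p) ∧
      connectedComponentIn Bᶜ x = connectedComponentIn Bᶜ x' := by
    intro x hx
    obtain ⟨x', -, h1, h2⟩ := hp.exists_near hA hx (hB.isOpen_compl.connectedComponentIn (x := x))
      (mem_connectedComponentIn (hAB hx))
    exact ⟨x', h2, connectedComponentIn_eq h1⟩
  obtain ⟨x', hx1, hx2⟩ := near x hx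
  obtain ⟨y', hy1, hy2⟩ := near y hy
  exact hne (hx2.trans ((key x' y' hx1 hy1).trans hy2.symm))

/-- Crossing sets with different attractors meet. -/
theorem inter_of_cross [TopologicalSpace X] [T2Space X] [CompactSpace X]
    [LocallyConnectedSpace X] [ContinuousConstSMul G X] {𝒰 : Ultrafilter ℕ} {g : ℕ → G}
    {A B : Set X} {p q : X} (hA : 2 < A.encard) (hAc : IsClosed A) (hB : 2 < B.encard)
    (hBc : IsClosed B) (hp : Attr 𝒰 g A p) (hq : Attr 𝒰 g B q) (hpq : p ≠ q)
    (hcr : Crosses A B) : (A ∩ B).Nonempty := by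
  rcases hcr with hne | ⟨hs1, hs2⟩
  · exact hne
  exfalso
  -- an argument covering every case in which the second set is of type II
  have aux : ∀ {A B : Set X} {p q : X}, 2 < A.encard → IsClosed B → Attr 𝒰 g A p →
      TII 𝒰 g B q → p ≠ q → ¬ SepSet B A := by
    intro A B p q hA hBc hp hq hpq
    obtain ⟨O, hO, hOc, hpO, hcl⟩ := exists_conn_nhd (W := {q}ᶜ) isOpen_compl_singleton
      (c := p) hpq
    refine not_sepSet hA hBc hp hO hOc hpO ?_
    filter_upwards [hq (closure O)ᶜ isClosed_closure.isOpen_compl (fun hqO => hcl hqO rfl)]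
      with i hi x hx hxO
    exact hi x hx (subset_closure hxO)
  rcases hq with hq | ⟨B', m, hq⟩
  · exact aux hA hBc hp hq hpq hs2
  rcases hp with hp | ⟨A', n, hp⟩
  · exact aux hB hAc hq.attr hp hpq.symm hs1
  obtain ⟨i, hi1, hi2⟩ := (hp.2.2.1.and hq.2.2.1).exists
  have hB'c : IsClosed B' := by rw [← hi2]; exact hBc.smul _
  have hpB : p ∈ B'ᶜ := by
    intro hpB
    have hpA := hp.2.1
    rw [← hi1, Set.mem_smul_set_iff_inv_smul_mem] at hpA
    rw [← hi2, Set.mem_smul_set_iff_inv_smul_mem] at hpB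
    exact hs1.1 hpB hpA
  obtain ⟨O, hO, hOc, hpO, hcl⟩ := exists_conn_nhd hB'c.isOpen_compl hpB
  refine not_sepSet hA hBc hp.attr hO hOc hpO ?_ hs2
  filter_upwards [hq.2.2.1] with i hi x hx hxO
  exact hcl (subset_closure hxO) (by rw [← hi]; exact Set.smul_mem_smul_set hx)

/-- A common point of two sets with different attractors is the repeller of one of them. -/
theorem bad_point [TopologicalSpace X] [T2Space X] {𝒰 : Ultrafilter ℕ} {g : ℕ → G}
    {A B : Set X} {p q c : X} (hp : Attr 𝒰 g A p) (hq : Attr 𝒰 g B q) (hpq : p ≠ q)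
    (hcA : c ∈ A) (hcB : c ∈ B) :
    (∃ A', TI 𝒰 g A A' c p) ∨ (∃ B', TI 𝒰 g B B' c q) := by
  have aux : ∀ {A : Set X} {p : X}, Attr 𝒰 g A p → c ∈ A →
      (∃ A', TI 𝒰 g A A' c p) ∨ Tendsto (fun i => g i • c) 𝒰 (𝓝 p) := by
    rintro A p (h | ⟨A', n, h⟩) hc
    · exact Or.inr (h.tendsto (Eventually.of_forall fun _ => hc))
    · by_cases hcn : c = n
      · exact Or.inl ⟨A', hcn ▸ h⟩
      · exact Or.inr (h.tendsto hc hcn)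
  rcases aux hp hcA with h | h
  · exact Or.inl h
  rcases aux hq hcB with h' | h'
  · exact Or.inr h'
  exact absurd (tendsto_nhds_unique h h') hpq

/-! ### Finiteness of the bad intersections -/

/-- Points `p ≠ q` have neighbourhoods `P`, `Q` such that the common points of a set attracted
into `P` and a set attracted into `Q` lie in a finite set or in one of finitely many type I sets,
whose attractors are outside `P ∪ Q`. -/
theorem bad_points_aux [MetricSpace X] [CompactSpace X] [LocallyConnectedSpace X]
    [ContinuousConstSMul G X]
    {𝓐 : Set (Set X)} (h : IsLocalConvPairing G 𝓐) {𝒰 : Ultrafilter ℕ}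
    (hU : (𝒰 : Filter ℕ) ≤ atTop) {g : ℕ → G} (hg : Function.Injective g)
    {p q : X} (hpq : p ≠ q) :
    ∃ P Q N : Set X, ∃ 𝓒 : Set (Set X), IsOpen P ∧ p ∈ P ∧ IsOpen Q ∧ q ∈ Q ∧ N.Finite ∧
      𝓒.Finite ∧ 𝓒 ⊆ 𝓐 ∧
      (∀ C ∈ 𝓒, ∃ C' n r, TI 𝒰 g C C' n r ∧ n ∈ N ∧ r ∉ P ∧ r ∉ Q) ∧
      ∀ A ∈ 𝓐, ∀ B ∈ 𝓐, ∀ a ∈ P, ∀ b ∈ Q, Attr 𝒰 g A a → Attr 𝒰 g B b →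
        ∀ c ∈ A ∩ B, c ∈ N ∨ ∃ C ∈ 𝓒, c ∈ C := by
  have hg' : Function.Injective (fun i => (g i)⁻¹) := fun a b hab => hg (inv_injective hab)
  obtain ⟨𝓑, h𝓑, hfin, hpS, hqS, hne⟩ := h.fine p q hpq
  have hSc : IsClosed (⋃₀ 𝓑) := by
    rw [Set.sUnion_eq_biUnion]; exact hfin.isClosed_biUnion fun B hB => h.closed B (h𝓑 hB)
  have hatt : ∀ B : Set X, ∃ m, B ∈ 𝓑 → Attr 𝒰 (fun i => (g i)⁻¹) B m := by
    intro B
    by_cases hB : B ∈ 𝓑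
    · obtain ⟨m, hm⟩ := exists_attr h hU hg' (h𝓑 hB)
      exact ⟨m, fun _ => hm⟩
    · exact ⟨p, fun hB' => absurd hB' hB⟩
  choose m hm using hatt
  let 𝓒 : Set (Set X) := {C | ∃ B ∈ 𝓑, ∃ n r, TI 𝒰 g C B n r}
  have h𝓒sub : 𝓒 ⊆ 𝓐 := by
    rintro C ⟨B, hB, n, r, hT⟩
    obtain ⟨i, hi⟩ := hT.dual.2.2.1.exists
    rw [← hi]; exact h.invariant _ _ (h𝓑 hB)
  have h𝓒fin : 𝓒.Finite := by
    -- a type I set is determined by its eventual translate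
    have hcst : ∀ B : Set X, {C | ∃ n r, TI 𝒰 g C B n r}.Subsingleton := by
      rintro B C ⟨n, r, hC⟩ D ⟨n', r', hD⟩
      exact hC.dual.target_unique hD.dual
    have : 𝓒 = ⋃ B ∈ 𝓑, {C | ∃ n r, TI 𝒰 g C B n r} := by ext C; simp [𝓒]
    rw [this]
    exact hfin.biUnion fun B _ => (hcst B).finite
  have h𝓒c : IsClosed (⋃₀ 𝓒) := by
    rw [Set.sUnion_eq_biUnion]; exact h𝓒fin.isClosed_biUnion fun C hC => h.closed C (h𝓒sub hC)
  refine ⟨connectedComponentIn (⋃₀ 𝓑)ᶜ p, connectedComponentIn (⋃₀ 𝓑)ᶜ q, m '' 𝓑, 𝓒,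
    hSc.isOpen_compl.connectedComponentIn, mem_connectedComponentIn hpS,
    hSc.isOpen_compl.connectedComponentIn, mem_connectedComponentIn hqS, hfin.image m, h𝓒fin,
    h𝓒sub, ?_, ?_⟩
  · rintro C ⟨B, hB, n, r, hT⟩
    refine ⟨B, n, r, hT, ⟨B, hB, ?_⟩, ?_, ?_⟩
    · exact Attr.unique (h.big B (h𝓑 hB)) (hm B hB) hT.dual.attr
    · exact fun hr => connectedComponentIn_subset _ _ hr ⟨B, hB, hT.2.1⟩
    · exact fun hr => connectedComponentIn_subset _ _ hr ⟨B, hB, hT.2.1⟩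
  · intro A hA B hB a ha b hb hAa hBb c hc
    by_contra! hcon
    obtain ⟨hcN, hcC⟩ := hcon
    have hcF : c ∈ (m '' 𝓑 ∪ ⋃₀ 𝓒)ᶜ := by
      rintro (h1 | ⟨C, hC, h1⟩)
      · exact hcN h1
      · exact hcC C hC h1
    obtain ⟨O, hO, hOc, hcO, hcl⟩ := exists_conn_nhd
      ((hfin.image m).isClosed.union h𝓒c).isOpen_compl hcF
    have hav : ∀ᶠ i in 𝒰, ∀ D ∈ 𝓑, ∀ x ∈ D, (g i)⁻¹ • x ∉ O := by
      rw [Filter.eventually_all_finite hfin]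
      intro D hD
      rcases hm D hD with hII | ⟨C, n, hI⟩
      · filter_upwards [hII (closure O)ᶜ isClosed_closure.isOpen_compl
          (fun hx => hcl hx (Or.inl ⟨D, hD, rfl⟩))] with i hi x hx hxO
        exact hi x hx (subset_closure hxO)
      · filter_upwards [hI.2.2.1] with i hi x hx hxO
        refine hcl (subset_closure hxO) (Or.inr ⟨C, ⟨D, hD, _, _, hI.dual'⟩, ?_⟩)
        rw [← hi]; exact Set.smul_mem_smul_set hx
    obtain ⟨x, -, hxO, hx⟩ := hAa.exists_near (h.big A hA) hc.1 hO hcO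
    obtain ⟨y, -, hyO, hy⟩ := hBb.exists_near (h.big B hB) hc.2 hO hcO
    obtain ⟨i, h1, h2, h3⟩ := (hav.and
      ((hx.eventually (hSc.isOpen_compl.connectedComponentIn.mem_nhds ha)).and
      (hy.eventually (hSc.isOpen_compl.connectedComponentIn.mem_nhds hb)))).exists
    have hsub : g i • O ⊆ (⋃₀ 𝓑)ᶜ := by
      rintro _ ⟨w, hw, rfl⟩ ⟨D, hD, hwD⟩
      exact h1 D hD _ hwD (by simpa using hw)
    apply hne
    rw [connectedComponentIn_eq h2, connectedComponentIn_eq h3]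
    exact same_comp (smul_preconn (g i) hOc) hsub (Set.smul_mem_smul_set hxO)
      (Set.smul_mem_smul_set hyO)

/-- Points `p ≠ q` have neighbourhoods `P`, `Q` such that all common points of a set attracted
into `P` and a set attracted into `Q` lie in one finite set. -/
theorem bad_points_finite [MetricSpace X] [CompactSpace X] [LocallyConnectedSpace X]
    [ContinuousConstSMul G X]
    {𝓐 : Set (Set X)} (h : IsLocalConvPairing G 𝓐) {𝒰 : Ultrafilter ℕ}
    (hU : (𝒰 : Filter ℕ) ≤ atTop) {g : ℕ → G} (hg : Function.Injective g)
    {p q : X} (hpq : p ≠ q) :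
    ∃ P Q N : Set X, IsOpen P ∧ p ∈ P ∧ IsOpen Q ∧ q ∈ Q ∧ N.Finite ∧
      ∀ A ∈ 𝓐, ∀ B ∈ 𝓐, ∀ a ∈ P, ∀ b ∈ Q, Attr 𝒰 g A a → Attr 𝒰 g B b → A ∩ B ⊆ N := by
  obtain ⟨P, Q, N, 𝓒, hP, hpP, hQ, hqQ, hN, h𝓒, h𝓒𝓐, hI, hbad⟩ := bad_points_aux h hU hg hpq
  -- points in an exceptional set `C` are handled by separating `p` from the attractor of `C`
  have hC : ∀ C : Set X, ∃ P' N' : Set X, C ∈ 𝓒 → IsOpen P' ∧ p ∈ P' ∧ N'.Finite ∧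
      ∀ A ∈ 𝓐, ∀ a ∈ P', Attr 𝒰 g A a → ∀ c ∈ A ∩ C, c ∈ N ∪ N' := by
    intro C
    by_cases hC : C ∈ 𝓒
    swap
    · exact ⟨∅, ∅, fun hC' => absurd hC' hC⟩
    obtain ⟨C', n, r, hT, hn, hrP, -⟩ := hI C hC
    have hpr : p ≠ r := fun hpr => hrP (hpr ▸ hpP)
    obtain ⟨P', R, N', 𝓓, hP', hpP', hR, hrR, hN', -, -, hI', hbad'⟩ := bad_points_aux h hU hg hpr
    refine ⟨P', N', fun _ => ⟨hP', hpP', hN', fun A hA a ha hAa c hc => ?_⟩⟩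
    by_cases hcn : c = n
    · exact Or.inl (hcn ▸ hn)
    rcases hbad' A hA C (h𝓒𝓐 hC) a ha r hrR hAa hT.attr c hc with h1 | ⟨D, hD, hcD⟩
    · exact Or.inr h1
    obtain ⟨D', n', r', hT', hn', -, hr'⟩ := hI' D hD
    by_cases hcn' : c = n'
    · exact Or.inr (hcn' ▸ hn')
    exact absurd (tendsto_nhds_unique (hT.tendsto hc.2 hcn) (hT'.tendsto hcD hcn') ▸ hrR) hr'
  choose P' N' hPN using hC
  refine ⟨P ∩ ⋂ C ∈ 𝓒, P' C, Q, N ∪ ⋃ C ∈ 𝓒, N' C, hP.inter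
    (h𝓒.isOpen_biInter fun C hC => (hPN C hC).1), ⟨hpP, mem_iInter₂.2 fun C hC => (hPN C hC).2.1⟩,
    hQ, hqQ, hN.union (h𝓒.biUnion fun C hC => (hPN C hC).2.2.1), ?_⟩
  intro A hA B hB a ha b hb hAa hBb c hc
  rcases hbad A hA B hB a ha.1 b hb hAa hBb c hc with h1 | ⟨C, hC, hcC⟩
  · exact Or.inl h1
  · rcases (hPN C hC).2.2.2 A hA a (mem_iInter₂.1 ha.2 C hC) hAa c ⟨hc.1, hcC⟩ with h1 | h1
    · exact Or.inl h1
    · exact Or.inr (mem_iUnion₂.2 ⟨C, hC, h1⟩)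

/-! ### All attractors coincide -/

/-- Let `A` be of type I with repeller `n` and attractor `p`. No crossing sequence whose
intermediate terms avoid both `n` and the eventual value of `(g i)⁻¹ • p` (if there is one) leads
from `A` to a set with an attractor other than `p`. -/
theorem chain_contra [MetricSpace X] [CompactSpace X] [LocallyConnectedSpace X]
    [ContinuousConstSMul G X]
    {𝓐 : Set (Set X)} (h : IsLocalConvPairing G 𝓐) {𝒰 : Ultrafilter ℕ}
    (hU : (𝒰 : Filter ℕ) ≤ atTop) {g : ℕ → G} (hg : Function.Injective g)
    {A' D : Set X} {n p q : X} {N : ℕ} (hN : 1 ≤ N) {a : ℕ → Set X}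
    (ha : ∀ i ≤ N + 1, a i ∈ 𝓐) (hcr : ∀ i ≤ N, Crosses (a i) (a (i + 1)))
    (hT : TI 𝒰 g (a 0) A' n p) (hnD : n ∈ D)
    (hrD : ∀ r, (∀ᶠ i in 𝒰, (g i)⁻¹ • p = r) → r ∈ D)
    (hD : ∀ i, 1 ≤ i → i ≤ N → a i ∩ D = ∅)
    (hq : Attr 𝒰 g (a (N + 1)) q) (hqp : q ≠ p) : False := by
  have hg' : Function.Injective (fun i => (g i)⁻¹) := fun a b hab => hg (inv_injective hab)
  have hD' : ∀ i, 1 ≤ i → i ≤ N → ∀ x ∈ a i, x ∉ D := by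
    intro i h1 h2 x hx hxD
    have : x ∈ a i ∩ D := ⟨hx, hxD⟩
    rw [hD i h1 h2] at this
    exact this
  -- `k + 1` is the first positive index of a set that does not shrink to `p`
  obtain ⟨k, hkN, hknot, hkII⟩ : ∃ k ≤ N, ¬ TII 𝒰 g (a (k + 1)) p ∧
      ∀ l, 1 ≤ l → l ≤ k → TII 𝒰 g (a l) p := by
    classical
    have hex : ∃ k, ¬ TII 𝒰 g (a (k + 1)) p := ⟨N, fun hII =>
      hqp (Attr.unique (h.big _ (ha _ le_rfl)) hq (Or.inl hII))⟩
    refine ⟨Nat.find hex, Nat.find_min' hex fun hII =>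
      hqp (Attr.unique (h.big _ (ha _ le_rfl)) hq (Or.inl hII)), Nat.find_spec hex, ?_⟩
    intro l h1 h2
    obtain ⟨l, rfl⟩ := Nat.exists_eq_add_of_le' h1
    exact not_not.1 (Nat.find_min hex (m := l) (by omega))
  have hAk : Attr 𝒰 g (a k) p := by
    rcases Nat.eq_zero_or_pos k with rfl | hk
    · exact hT.attr
    · exact Or.inl (hkII k hk le_rfl)
  have hk1 : a (k + 1) ∈ 𝓐 := ha _ (by omega)
  obtain ⟨J, nj, pj, hTj, hnj⟩ : ∃ J nj pj, TI 𝒰 g (a (k + 1)) J nj pj ∧ nj ≠ n := by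
    obtain ⟨s, hs⟩ := exists_attr h hU hg hk1
    by_cases hsp : s = p
    · subst hsp
      rcases hs with hs | ⟨J, nj, hs⟩
      · exact absurd hs hknot
      · have hkN' : k + 1 ≤ N := by
          by_contra hlt
          obtain rfl : k = N := by omega
          exact hqp (Attr.unique (h.big _ hk1) hq hs.attr)
        exact ⟨J, nj, s, hs, fun hnn => hD' (k + 1) (by omega) hkN' nj hs.1 (hnn ▸ hnD)⟩
    · obtain ⟨c, hc1, hc2⟩ := inter_of_cross (h.big _ (ha k (by omega)))
        (h.closed _ (ha k (by omega))) (h.big _ hk1) (h.closed _ hk1) hAk hs (Ne.symm hsp) (hcr k hkN)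
      have hcn : c ≠ n := by
        rintro rfl
        rcases Nat.eq_zero_or_pos k with rfl | hk
        · exact hD' 1 le_rfl hN c hc2 hnD
        · exact hD' k hk hkN c hc1 hnD
      rcases bad_point hAk hs (Ne.symm hsp) hc1 hc2 with ⟨K, hK⟩ | ⟨J, hJ⟩
      · rcases Nat.eq_zero_or_pos k with rfl | hk
        · exact absurd (hK.rep_unique (h.big _ (ha 0 (by omega))) hT) hcn
        · exact (hK.not_TII (h.big _ (ha k (by omega))) (hkII k hk le_rfl)).elim
      · exact ⟨J, c, s, hJ, hcn⟩
  -- limits of the attractors, under the inverse sequence, of the translated terms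
  have hatt : ∀ S : Set X, ∃ m, S ∈ 𝓐 → Attr 𝒰 (fun i => (g i)⁻¹) S m := by
    intro S
    by_cases hS : S ∈ 𝓐
    · obtain ⟨m, hm⟩ := exists_attr h hU hg' hS
      exact ⟨m, fun _ => hm⟩
    · exact ⟨p, fun hS' => absurd hS' hS⟩
  choose m hm using hatt
  have hlim := fun l => exists_lim 𝒰 (fun i => m (g i • a l))
  choose L hL using hlim
  have hLI : ∀ l ≤ N + 1, ∀ S c d, TI 𝒰 g (a l) S c d → L l = c := by
    intro l hl S c d hS
    have hS𝓐 : S ∈ 𝓐 := by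
      obtain ⟨i, hi⟩ := hS.2.2.1.exists
      rw [← hi]; exact h.invariant _ _ (ha l hl)
    have hmS : m S = c := Attr.unique (h.big S hS𝓐) (hm S hS𝓐) hS.dual.attr
    refine tendsto_nhds_unique (hL l) (tendsto_const_nhds.congr' ?_)
    filter_upwards [hS.2.2.1] with i hi
    rw [hi, hmS]
  obtain ⟨l, hlk, hLl⟩ : ∃ l ≤ k, L l ≠ L (l + 1) := by
    by_contra! hcon
    have : ∀ l ≤ k + 1, L l = L 0 := by
      intro l
      induction l with
      | zero => intro _; rfl
      | succ l ih => intro hl; rw [← hcon l (by omega), ih (by omega)]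
    apply hnj
    rw [← hLI 0 (by omega) _ _ _ hT, ← hLI (k + 1) (by omega) _ _ _ hTj, this _ le_rfl]
  obtain ⟨P, Q, F, hP, hlP, hQ, hlQ, hF, hbad⟩ := bad_points_finite h hU hg' hLl
  obtain ⟨P0, Q0, hP0, hQ0, hlP0, hlQ0, hdisj⟩ := t2_separation hLl
  have hal : a l ∈ 𝓐 := ha l (by omega)
  have hal1 : a (l + 1) ∈ 𝓐 := ha (l + 1) (by omega)
  have hev : ∀ᶠ i in 𝒰, g i • (a l ∩ a (l + 1)) ⊆ F ∧ (a l ∩ a (l + 1)).Nonempty := by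
    filter_upwards [(hL l).eventually ((hP.inter hP0).mem_nhds ⟨hlP, hlP0⟩),
      (hL (l + 1)).eventually ((hQ.inter hQ0).mem_nhds ⟨hlQ, hlQ0⟩)] with i h1 h2
    have hA1 := h.invariant (g i) _ hal
    have hA2 := h.invariant (g i) _ hal1
    rw [Set.smul_set_inter]
    refine ⟨hbad _ hA1 _ hA2 _ h1.1 _ h2.1 (hm _ hA1) (hm _ hA2), ?_⟩
    have := inter_of_cross (h.big _ hA1) (h.closed _ hA1) (h.big _ hA2) (h.closed _ hA2)
      (hm _ hA1) (hm _ hA2) (fun heq => Set.disjoint_left.1 hdisj h1.2 (heq ▸ h2.2))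
      ((hcr l (by omega)).smul (g i))
    rw [← Set.smul_set_inter] at this
    simpa using this
  obtain ⟨-, -, e, he⟩ := hev.exists
  obtain ⟨e0, -, he0⟩ := eventually_eq_of_finite 𝒰 (f := fun i => g i • e) hF
    (by filter_upwards [hev] with i hi; exact hi.1 (Set.smul_mem_smul_set he))
  have hlimE : Tendsto (fun i => g i • e) 𝒰 (𝓝 e0) :=
    tendsto_const_nhds.congr' (by filter_upwards [he0] with i hi; exact hi.symm)
  have hind : (1 ≤ l ∧ l ≤ N) ∨ (1 ≤ l + 1 ∧ l + 1 ≤ N) := by omega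
  have he0p : e0 = p := by
    rcases Nat.eq_zero_or_pos l with rfl | hl
    · refine tendsto_nhds_unique hlimE (hT.tendsto he.1 ?_)
      rintro rfl
      exact hD' 1 le_rfl hN _ he.2 hnD
    · exact tendsto_nhds_unique hlimE
        ((hkII l hl hlk).tendsto (Eventually.of_forall fun _ => he.1))
  subst he0p
  have heD : e ∈ D := hrD e (by filter_upwards [he0] with i hi; rw [← hi, inv_smul_smul])
  rcases hind with ⟨h1, h2⟩ | ⟨h1, h2⟩
  · exact hD' _ h1 h2 _ he.1 heD
  · exact hD' _ h1 h2 _ he.2 heD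

/-- Any two members of `𝓐` have the same attractor. -/
theorem attr_eq [MetricSpace X] [CompactSpace X] [LocallyConnectedSpace X]
    [ContinuousConstSMul G X]
    {𝓐 : Set (Set X)} (h : IsLocalConvPairing G 𝓐) {𝒰 : Ultrafilter ℕ}
    (hU : (𝒰 : Filter ℕ) ≤ atTop) {g : ℕ → G} (hg : Function.Injective g)
    {A B : Set X} (hA : A ∈ 𝓐) (hB : B ∈ 𝓐) {p q : X} (hp : Attr 𝒰 g A p)
    (hq : Attr 𝒰 g B q) : p = q := by
  -- the core case: `A` is of type I and its repeller lies in `B`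
  have core : ∀ {A B A' : Set X} {n p q : X}, A ∈ 𝓐 → B ∈ 𝓐 → TI 𝒰 g A A' n p →
      Attr 𝒰 g B q → n ∈ B → p = q := by
    intro A B A' n p q hA hB hT hq hnB
    by_contra hpq
    have hne : ∀ d ∈ B ∩ A, d ≠ n → ∃ B', TI 𝒰 g B B' d q := by
      intro d hd hdn
      rcases bad_point hT.attr hq hpq hd.2 hd.1 with ⟨A'', h1⟩ | h1
      · exact absurd (h1.rep_unique (h.big A hA) hT) hdn
      · exact h1
    have hle : (B ∩ A).encard ≤ 2 := by
      by_contra hlt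
      obtain ⟨d, hd, hdn, -⟩ := exists_not_two (not_le.1 hlt) n n
      obtain ⟨d', hd', hdn', hdd⟩ := exists_not_two (not_le.1 hlt) n d
      obtain ⟨_, h1⟩ := hne d hd hdn
      obtain ⟨_, h2⟩ := hne d' hd' hdn'
      exact hdd (h2.rep_unique (h.big B hB) h1)
    have hrA : ∀ r, (∀ᶠ i in 𝒰, (g i)⁻¹ • p = r) → r ∈ A := by
      intro r hr
      obtain ⟨i, h1, h2⟩ := (hr.and hT.2.2.1).exists
      rw [← h1, ← Set.mem_smul_set_iff_inv_smul_mem, h2]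
      exact hT.2.1
    have hD : ∃ D, n ∈ D ∧ (∀ r, (∀ᶠ i in 𝒰, (g i)⁻¹ • p = r) → r ∈ D) ∧
        CrossSeqAvoiding 𝓐 B A D := by
      obtain ⟨hs1, hs2⟩ := h.connect B hB A hA hle
      by_cases hsing : ∃ c, B ∩ A = {c}
      · obtain ⟨c, hc⟩ := hsing
        obtain rfl : n = c := by
          have : n ∈ B ∩ A := ⟨hnB, hT.1⟩
          rw [hc] at this; exact this
        by_cases hr : ∃ r, r ≠ n ∧ ∀ᶠ i in 𝒰, (g i)⁻¹ • p = r
        · obtain ⟨r, hrn, hr⟩ := hr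
          refine ⟨{r, n}, by simp, fun r' hr' => ?_, hs1 n hc r (hrA r hr) hrn⟩
          obtain ⟨i, h1, h2⟩ := (hr.and hr').exists
          simp [← h1, ← h2]
        · push Not at hr
          obtain ⟨b, hb, hbn, -⟩ := exists_not_two (h.big A hA) n n
          refine ⟨{b, n}, by simp, fun r' hr' => ?_, hs1 n hc b hb hbn⟩
          by_contra hrn
          obtain ⟨i, h1, h2⟩ := ((hr r' (fun h1 => hrn (by simp [h1]))).and hr').exists
          exact h1 h2
      · refine ⟨B ∩ A, ⟨hnB, hT.1⟩, fun r hr => ⟨?_, hrA r hr⟩, hs2 hsing⟩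
        -- a second common point `d` is the repeller of `B`, so `p = lim g i • d` lies in the
        -- eventual translate of `B`
        obtain ⟨d, hd, hdn⟩ : ∃ d ∈ B ∩ A, d ≠ n := by
          by_contra! hcon
          exact hsing ⟨n, Set.eq_singleton_iff_unique_mem.2 ⟨⟨hnB, hT.1⟩, hcon⟩⟩
        obtain ⟨B', hTB⟩ := hne d hd hdn
        have hB'c : IsClosed B' := by
          obtain ⟨i, hi⟩ := hTB.2.2.1.exists
          rw [← hi]; exact (h.closed B hB).smul _
        have hpB' : p ∈ B' := hB'c.mem_of_tendsto (hT.tendsto hd.2 hdn) (by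
          filter_upwards [hTB.2.2.1] with i hi
          rw [← hi]; exact Set.smul_mem_smul_set hd.1)
        obtain ⟨i, h1, h2⟩ := (hr.and hTB.2.2.1).exists
        rw [← h1, ← Set.mem_smul_set_iff_inv_smul_mem, h2]
        exact hpB'
    obtain ⟨D, hnD, hrD, N, hN, c, hc0, hcN, hc𝓐, hcr, hav⟩ := hD
    refine chain_contra h hU hg hN (a := fun i => c (N + 1 - i)) (n := n) (p := p) (q := q)
      (A' := A') (D := D) ?_ ?_ ?_ hnD hrD ?_ ?_ (Ne.symm hpq)
    · intro i hi; exact hc𝓐 _ (by omega)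
    · intro i hi
      have := (hcr (N - i) (by omega)).symm
      rw [show N - i + 1 = N + 1 - i by omega] at this
      rwa [show N + 1 - (i + 1) = N - i by omega]
    · simpa [hcN] using hT
    · intro i h1 h2; exact hav _ (by omega) (by omega)
    · simpa [hc0] using hq
  have cross : ∀ {A B : Set X} {p q : X}, A ∈ 𝓐 → B ∈ 𝓐 → Attr 𝒰 g A p →
      Attr 𝒰 g B q → Crosses A B → p = q := by
    intro A B p q hA hB hp hq hcr
    by_contra hpq
    obtain ⟨c, hcA, hcB⟩ := inter_of_cross (h.big A hA) (h.closed A hA) (h.big B hB)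
      (h.closed B hB) hp hq hpq hcr
    rcases bad_point hp hq hpq hcA hcB with ⟨A', hT⟩ | ⟨B', hT⟩
    · exact hpq (core hA hB hT hq hcB)
    · exact hpq (core hB hA hT hp hcA).symm
  by_cases hne : (A ∩ B).Nonempty
  · exact cross hA hB hp hq (Or.inl hne)
  rw [Set.not_nonempty_iff_eq_empty] at hne
  obtain ⟨-, h2⟩ := h.connect A hA B hB (by simp [hne])
  obtain ⟨N, -, c, hc0, hcN, hc𝓐, hcr, -⟩ := h2 (by
    rintro ⟨c, hc⟩; rw [hne] at hc; exact (Set.singleton_ne_empty c) hc.symm)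
  have : ∀ i ≤ N + 1, Attr 𝒰 g (c i) p := by
    intro i
    induction i with
    | zero => intro _; rwa [hc0]
    | succ i ih =>
      intro hi
      obtain ⟨s, hs⟩ := exists_attr h hU hg (hc𝓐 (i + 1) hi)
      rwa [cross (hc𝓐 i (by omega)) (hc𝓐 (i + 1) hi) (ih (by omega)) hs (hcr i (by omega))]
  exact Attr.unique (h.big B hB) (hcN ▸ this (N + 1) le_rfl) hq

/-! ### Convergence on `X` -/

/-- Along the ultrafilter, `g` converges on all of `X` with a repeller and an attractor. -/
theorem exists_limit_pair [MetricSpace X] [CompactSpace X] [ConnectedSpace X] [LocallyConnectedSpace X]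
    [ContinuousConstSMul G X] (hcut : ∀ x : X, IsPreconnected ({x}ᶜ : Set X))
    {𝓐 : Set (Set X)} (h : IsLocalConvPairing G 𝓐) {𝒰 : Ultrafilter ℕ}
    (hU : (𝒰 : Filter ℕ) ≤ atTop) {g : ℕ → G} (hg : Function.Injective g) :
    ∃ n p : X, ∀ U V : Set X, IsOpen U → n ∈ U → IsOpen V → p ∈ V →
      ∀ᶠ i in 𝒰, ∀ x, x ∈ U ∨ g i • x ∈ V := by
  rcases 𝓐.eq_empty_or_nonempty with h0 | ⟨A, hA⟩
  · obtain ⟨z⟩ := (inferInstance : Nonempty X)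
    refine ⟨z, z, fun U V _ hz _ _ => Eventually.of_forall fun i x => Or.inl ?_⟩
    have hxz : x = z := by
      by_contra hxz
      -- without members of `𝓐` only the empty set could separate two points of `X`
      obtain ⟨𝓑, h𝓑, -, -, -, hne⟩ := h.fine x z hxz
      obtain rfl : 𝓑 = ∅ := Set.subset_empty_iff.1 (h0 ▸ h𝓑)
      apply hne
      exact same_comp isPreconnected_univ (by simp) (mem_univ x) (mem_univ z)
    rwa [hxz]
  have hg' : Function.Injective (fun i => (g i)⁻¹) := fun a b hab => hg (inv_injective hab)
  obtain ⟨p, hp⟩ := exists_attr h hU hg hA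
  obtain ⟨n, hn⟩ := exists_attr h hU hg' hA
  refine ⟨n, p, fun U V hUo hnU hV hpV => ?_⟩
  by_contra hcon
  rw [← Ultrafilter.eventually_not] at hcon
  simp only [not_forall, not_or] at hcon
  obtain ⟨x, hx⟩ := hcon.choice
  obtain ⟨y, hy⟩ := exists_lim 𝒰 (fun i => g i • x i)
  have hyV : y ∉ V := hV.isClosed_compl.mem_of_tendsto hy
    (by filter_upwards [hx] with i hi; exact hi.2)
  obtain ⟨𝓑, h𝓑, hfin, hyS, hpS, hne⟩ := h.fine y p (fun hyp => hyV (hyp ▸ hpV))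
  have hSc : IsClosed (⋃₀ 𝓑) := by
    rw [Set.sUnion_eq_biUnion]; exact hfin.isClosed_biUnion fun B hB => h.closed B (h𝓑 hB)
  -- a point of `A` converging to `p` and different from `n`
  obtain ⟨s, hs⟩ := hp.exists_tendsto
  obtain ⟨z, hzA, hzs, hzn⟩ := exists_not_two (h.big A hA) s n
  have hz := hs z hzA hzs
  obtain ⟨K, hKc, hKp, hUK, hKn⟩ := exists_compact_conn (Ω := {n}ᶜ) (C := (U \ {z})ᶜ)
    isOpen_compl_singleton (hcut n) (hUo.sdiff isClosed_singleton).isClosed_compl.isCompact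
    (by rintro w hw rfl; exact hw ⟨hnU, fun hwz => hzn hwz.symm⟩)
  have hav : ∀ᶠ i in 𝒰, ∀ B ∈ 𝓑, ∀ w ∈ B, (g i)⁻¹ • w ∉ K := by
    rw [Filter.eventually_all_finite hfin]
    intro B hB
    obtain ⟨n', hn'⟩ := exists_attr h hU hg' (h𝓑 hB)
    obtain rfl := attr_eq h hU hg' hA (h𝓑 hB) hn hn'
    rcases hn' with hII | ⟨C, r, hI⟩
    · exact hII Kᶜ hKc.isClosed.isOpen_compl (fun hnK => hKn hnK rfl)
    · -- the repeller of a type I set for the inverse sequence is `p`, which is not in `B`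
      have hC𝓐 : C ∈ 𝓐 := by
        obtain ⟨i, hi⟩ := hI.2.2.1.exists
        rw [← hi]; exact h.invariant _ _ (h𝓑 hB)
      have : r = p := attr_eq h hU hg hC𝓐 hA hI.dual'.attr hp
      exact absurd ⟨B, hB, this ▸ hI.1⟩ hpS
  obtain ⟨i, h1, h2, h3, h4⟩ := (hav.and (hx.and
    ((hy.eventually (hSc.isOpen_compl.connectedComponentIn.mem_nhds
      (mem_connectedComponentIn hyS))).and
    (hz.eventually (hSc.isOpen_compl.connectedComponentIn.mem_nhds
      (mem_connectedComponentIn hpS)))))).exists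
  apply hne
  rw [connectedComponentIn_eq h3, connectedComponentIn_eq h4]
  refine same_comp (smul_preconn (g i) hKp) ?_
    (Set.smul_mem_smul_set (hUK fun hw => h2.1 hw.1))
    (Set.smul_mem_smul_set (hUK fun hw => hw.2 rfl))
  rintro _ ⟨w, hw, rfl⟩ ⟨B, hB, hwB⟩
  exact h1 B hB _ hwB (by simpa using hw)

end Aux

/-- If `(G, 𝓐)` is a local convergence pairing on a Peano continuum `X` without cut
points, then `G` acts as a convergence group on `X`. -/
theorem localConvPairing_convergence {G X : Type*} [Group G] [MulAction G X]
    [MetricSpace X] [CompactSpace X] [ConnectedSpace X] [LocallyConnectedSpace X]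
    [ContinuousConstSMul G X]
    (hcut : ∀ x : X, IsPreconnected ({x}ᶜ : Set X))
    (𝓐 : Set (Set X)) (h : IsLocalConvPairing G 𝓐) :
    ConvGroupOn (Set.univ : Set G) (Set.univ : Set X) := by
  intro g _ hg
  have hU : ((hyperfilter ℕ : Ultrafilter ℕ) : Filter ℕ) ≤ atTop := by
    rw [← Nat.cofinite_eq_atTop]; exact hyperfilter_le_cofinite
  obtain ⟨n, p, hnp⟩ := exists_limit_pair hcut h hU hg
  -- choose a subsequence along countable neighbourhood bases of `n` and `p`
  have hfr : ∀ m : ℕ, ∃ᶠ i in atTop, ∀ x, x ∈ Metric.ball n (1 / ((m : ℝ) + 1)) ∨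
      g i • x ∈ Metric.ball p (1 / ((m : ℝ) + 1)) := fun m =>
    ((hnp _ _ Metric.isOpen_ball (Metric.mem_ball_self Nat.one_div_pos_of_nat) Metric.isOpen_ball
      (Metric.mem_ball_self Nat.one_div_pos_of_nat)).frequently).filter_mono hU
  obtain ⟨k, hk, hkm⟩ := extraction_forall_of_frequently hfr
  refine ⟨k, hk, n, p, mem_univ _, mem_univ _, ?_⟩
  intro C _ hC hnC U hUo hpU
  obtain ⟨ε, hε, hεC⟩ := Metric.isOpen_iff.1 hC.isClosed.isOpen_compl n hnC
  obtain ⟨δ, hδ, hδU⟩ := Metric.isOpen_iff.1 hUo p hpU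
  have h0 : Tendsto (fun m : ℕ => 1 / ((m : ℝ) + 1)) atTop (𝓝 0) :=
    tendsto_one_div_add_atTop_nhds_zero_nat
  filter_upwards [h0.eventually (gt_mem_nhds hε), h0.eventually (gt_mem_nhds hδ)] with m h1 h2
  rintro _ ⟨x, hx, rfl⟩
  rcases hkm m x with h3 | h3
  · exact absurd hx (hεC (Metric.ball_subset_ball h1.le h3))
  · exact hδU (Metric.ball_subset_ball h2.le h3)
end

section
/- Let (G, 𝓐) be a local convergence pairing on a Peano continuum X without cut points, and let 𝓑 ⊆ 𝓐 be finite and cross-connected. If (g_i) is a sequence of elements of G, then either the sequence of sets (g_i(∪𝓑)) is null (i.e., diam(g_i(∪𝓑)) → 0), or there exist B ∈ 𝓑, A ∈ 𝓐 and a subsequence (g_{i_n}) of (g_i) with g_{i_n}(B) = A for all n. -/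
/-!
If no `B ∈ 𝓑` is carried to one fixed set along a subsequence, then each set occurs only finitely
often among the `g i • B`, so nullity of `𝓐` forces `diam (g i • B) → 0` for every `B ∈ 𝓑`
(`ImagesMerge.self_of_null`). It remains to see that the small sets `g i • B` and `g i • B'` are close
together. Along a crossing sequence it is enough to treat crossing `B`, `B'`. If they meet this is
clear. Otherwise `B` separates `B'`; by compactness and local connectedness the small set
`g i • B'` lies in a small connected set `U` (`exists_small_preconnected`), and `U` must meet
`g i • B`, since otherwise `(g i)⁻¹ • U` would be a connected subset of `Bᶜ` containing `B'`.
-/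

open Set Filter Topology Pointwise

/-- Uniform local connectedness of a compact locally connected metric space. -/
lemma exists_small_preconnected {X : Type*} [MetricSpace X] [CompactSpace X]
    [LocallyConnectedSpace X] {ε : ℝ} (hε : 0 < ε) :
    ∃ δ > 0, ∀ x : X, ∃ U : Set X, IsPreconnected U ∧ Metric.ball x δ ⊆ U ∧
      ∀ y ∈ U, ∀ z ∈ U, dist y z < ε := by
  have hε2 : 0 < ε / 2 := half_pos hε
  obtain ⟨δ, hδ, H⟩ := lebesgue_number_lemma_of_metric (s := (univ : Set X))
    (c := fun x : X => connectedComponentIn (Metric.ball x (ε / 2)) x) isCompact_univ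
    (fun x => Metric.isOpen_ball.connectedComponentIn)
    (fun x _ => mem_iUnion.2 ⟨x, mem_connectedComponentIn (Metric.mem_ball_self hε2)⟩)
  refine ⟨δ, hδ, fun x => ?_⟩
  obtain ⟨w, hw⟩ := H x (mem_univ x)
  refine ⟨_, isPreconnected_connectedComponentIn, hw, fun y hy z hz => ?_⟩
  have h1 := Metric.mem_ball.1 (connectedComponentIn_subset _ _ hy)
  have h2 := Metric.mem_ball.1 (connectedComponentIn_subset _ _ hz)
  linarith [dist_triangle_right y z w]

/-- The images of `B` and `B'` under `g i` become uniformly close as `i → ∞`. For `B = B'` this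
says that the diameters of the `g i • B` tend to `0`. -/
def ImagesMerge {G X : Type*} [Group G] [MulAction G X] [MetricSpace X] (g : ℕ → G)
    (B B' : Set X) : Prop :=
  ∀ ε : ℝ, 0 < ε → ∀ᶠ i in atTop, ∀ x ∈ B, ∀ y ∈ B', dist (g i • x) (g i • y) < ε

lemma ImagesMerge.trans {G X : Type*} [Group G] [MulAction G X] [MetricSpace X] {g : ℕ → G}
    {B C D : Set X} (h₁ : ImagesMerge g B C) (h₂ : ImagesMerge g C D) (hC : C.Nonempty) :
    ImagesMerge g B D := by
  intro ε hε
  obtain ⟨c, hc⟩ := hC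
  filter_upwards [h₁ _ (half_pos hε), h₂ _ (half_pos hε)] with i h1 h2 x hx y hy
  linarith [dist_triangle (g i • x) (g i • c) (g i • y), h1 x hx c hc, h2 c hc y hy]

/-- Crossing sets whose images shrink have images that shrink together. -/
lemma ImagesMerge.of_crosses {G X : Type*} [Group G] [MulAction G X] [MetricSpace X]
    [CompactSpace X] [LocallyConnectedSpace X] [ContinuousConstSMul G X] {g : ℕ → G}
    {B C : Set X} (hB : ImagesMerge g B B) (hC : ImagesMerge g C C) (hX : Crosses B C) :
    ImagesMerge g B C := by
  intro ε hε
  rcases hX with ⟨c, hcB, hcC⟩ | ⟨⟨-, x₀, hx₀, y₀, hy₀, hne⟩, -⟩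
  · filter_upwards [hB _ (half_pos hε), hC _ (half_pos hε)] with i h1 h2 x hx y hy
    linarith [dist_triangle (g i • x) (g i • c) (g i • y), h1 x hx c hcB, h2 c hcC y hy]
  · obtain ⟨δ, hδ, H⟩ := exists_small_preconnected (X := X) (half_pos hε)
    filter_upwards [hB _ (half_pos hε), hC _ hδ] with i h1 h2 x hx y hy
    obtain ⟨U, hU, hsub, hd⟩ := H (g i • x₀)
    have hCU : ∀ z ∈ C, g i • z ∈ U := fun z hz => hsub (h2 z hz x₀ hx₀)
    have hmeet : ∃ b ∈ B, g i • b ∈ U := by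
      by_contra! hcon
      have hpre : IsPreconnected ((g i)⁻¹ • U) :=
        hU.image _ (continuous_const_smul (g i)⁻¹).continuousOn
      have hBc : (g i)⁻¹ • U ⊆ Bᶜ := fun z hz hzB =>
        hcon z hzB (mem_inv_smul_set_iff.1 hz)
      have hy := hpre.subset_connectedComponentIn (mem_inv_smul_set_iff.2 (hCU x₀ hx₀)) hBc
        (mem_inv_smul_set_iff.2 (hCU y₀ hy₀))
      exact hne (connectedComponentIn_eq hy)
    obtain ⟨b, hb, hbU⟩ := hmeet
    linarith [dist_triangle (g i • x) (g i • b) (g i • y), h1 x hx b hb,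
      hd _ hbU _ (hCU y hy)]

/-- By nullity, a set whose images take every value only finitely often has shrinking images. -/
lemma ImagesMerge.self_of_null {G X : Type*} [Group G] [MulAction G X] [MetricSpace X]
    [CompactSpace X] {𝓐 : Set (Set X)} (hnull : NullFam 𝓐)
    (hinv : ∀ g : G, ∀ A ∈ 𝓐, g • A ∈ 𝓐) {B : Set X} (hB : B ∈ 𝓐) {g : ℕ → G}
    (hne : ∀ A ∈ 𝓐, ∀ᶠ i in atTop, g i • B ≠ A) : ImagesMerge g B B := by
  intro ε hε
  have hall := (hnull _ (half_pos hε)).eventually_all.2 fun A hA => hne A hA.1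
  filter_upwards [hall] with i hi x hx y hy
  have hd : Metric.diam (g i • B) ≤ ε / 2 := by
    by_contra! hlt
    exact hi _ ⟨hinv _ _ hB, hlt⟩ rfl
  have := Metric.dist_le_diam_of_mem (isCompact_univ.isBounded.subset (subset_univ (g i • B)))
    (smul_mem_smul_set hx) (smul_mem_smul_set hy)
  linarith

/-- Pigeonhole lemma: for a finite cross-connected `𝓑 ⊆ 𝓐`, either the images
`g_i(⋃𝓑)` form a null sequence, or some `B ∈ 𝓑` is mapped to a fixed `A ∈ 𝓐`
along a subsequence. -/
theorem pigeonhole_lemma {G X : Type*} [Group G] [MulAction G X]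
    [MetricSpace X] [CompactSpace X] [ConnectedSpace X] [LocallyConnectedSpace X]
    [ContinuousConstSMul G X]
    (hcut : ∀ x : X, IsPreconnected ({x}ᶜ : Set X))
    (𝓐 𝓑 : Set (Set X)) (h : IsLocalConvPairing G 𝓐)
    (h𝓑 : 𝓑 ⊆ 𝓐) (hfin : 𝓑.Finite) (hcc : CrossConnected 𝓑)
    (g : ℕ → G) :
    Tendsto (fun i => Metric.diam (g i • ⋃₀ 𝓑)) atTop (𝓝 0) ∨
      ∃ B ∈ 𝓑, ∃ A ∈ 𝓐, ∃ k : ℕ → ℕ, StrictMono k ∧ ∀ m : ℕ, g (k m) • B = A := by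
  by_cases hex : ∃ B ∈ 𝓑, ∃ A ∈ 𝓐, ∃ᶠ i in atTop, g i • B = A
  · obtain ⟨B, hB, A, hA, hf⟩ := hex
    obtain ⟨k, hk, hkA⟩ := extraction_of_frequently_atTop hf
    exact Or.inr ⟨B, hB, A, hA, k, hk, hkA⟩
  left
  have hself : ∀ B ∈ 𝓑, ImagesMerge g B B := fun B hB =>
    ImagesMerge.self_of_null h.null h.invariant (h𝓑 hB) fun A hA =>
      not_frequently.1 fun hf => hex ⟨B, hB, A, hA, hf⟩
  have hnonempty : ∀ B ∈ 𝓑, B.Nonempty := fun B hB =>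
    encard_pos.1 (lt_of_le_of_lt zero_le (h.big B (h𝓑 hB)))
  have hpair : ∀ B ∈ 𝓑, ∀ C ∈ 𝓑, ImagesMerge g B C := by
    intro B hB C hC
    obtain ⟨n, c, rfl, rfl, hmem, hcr⟩ := hcc B hB C hC
    have key : ∀ j ≤ n, ImagesMerge g (c 0) (c j) := by
      intro j
      induction j with
      | zero => exact fun _ => hself _ hB
      | succ j ih =>
        intro hj
        have hjm := hmem j (by omega)
        exact (ih (by omega)).trans
          (.of_crosses (hself _ hjm) (hself _ (hmem _ hj)) (hcr j hj)) (hnonempty _ hjm)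
    exact key n le_rfl
  rw [Metric.tendsto_atTop]
  intro ε hε
  have hall : ∀ᶠ i in atTop, ∀ B ∈ 𝓑, ∀ C ∈ 𝓑, ∀ x ∈ B, ∀ y ∈ C,
      dist (g i • x) (g i • y) < ε / 2 :=
    hfin.eventually_all.2 fun B hB => hfin.eventually_all.2 fun C hC =>
      hpair B hB C hC _ (half_pos hε)
  obtain ⟨N, hN⟩ := eventually_atTop.1 hall
  refine ⟨N, fun i hi => ?_⟩
  rw [Real.dist_0_eq_abs, abs_of_nonneg Metric.diam_nonneg]
  refine lt_of_le_of_lt (Metric.diam_le_of_forall_dist_le (half_pos hε).le ?_) (half_lt_self hε)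
  rintro _ ⟨x, ⟨B, hB, hx⟩, rfl⟩ _ ⟨y, ⟨C, hC, hy⟩, rfl⟩
  exact (hN i hi B hB C hC x hx y hy).le
end

section
/- Let Y be a Peano continuum without cut points. For any point x ∈ Y and any ε > 0, there is a δ > 0 such that Y \ B(x, ε) is contained in a single connected component of Y \ B(x, δ), where B(x, r) denotes the open metric ball of radius r about x. -/
/-!
Fix a point `c` outside `B(x, ε)` (if there is none, the claim is trivial), and let `U δ` be the
component of `c` in the complement of the closed ball of radius `δ` about `x`. By local
connectedness each `U δ` is open, and `U δ` grows as `δ` decreases. The union of all `U δ` is open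
and relatively closed in `Y \ {x}`, which is connected as `x` is not a cut point, so the `U δ`
cover `Y \ {x}`. The compact set `Y \ B(x, ε)` is therefore contained in a single `U δ`.
-/

open Set Filter Topology Pointwise

/-- In a Peano continuum without cut points, for every `x` and `ε > 0` there is `δ > 0`
such that the complement of `B(x, ε)` lies in a single component of the complement of
`B(x, δ)`. -/
theorem complement_ball_in_single_component {Y : Type*} [MetricSpace Y] [CompactSpace Y]
    [ConnectedSpace Y] [LocallyConnectedSpace Y]
    (hcut : ∀ y : Y, IsPreconnected ({y}ᶜ : Set Y))
    (x : Y) (ε : ℝ) (hε : 0 < ε) :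
    ∃ δ : ℝ, 0 < δ ∧ ∃ c : Y,
      (Metric.ball x ε)ᶜ ⊆ connectedComponentIn (Metric.ball x δ)ᶜ c := by
  rcases (Metric.ball x ε)ᶜ.eq_empty_or_nonempty with hK | ⟨c, hc⟩
  · exact ⟨1, one_pos, x, by simp [hK]⟩
  have hcx : c ≠ x := by
    rintro rfl
    exact hc (Metric.mem_ball_self hε)
  let U : {δ : ℝ // 0 < δ} → Set Y := fun δ =>
    connectedComponentIn (Metric.closedBall x δ.1)ᶜ c
  have hUo : ∀ δ, IsOpen (U δ) := fun δ =>
    Metric.isClosed_closedBall.isOpen_compl.connectedComponentIn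
  have hUmono : ∀ δ δ' : {δ : ℝ // 0 < δ}, δ.1 ≤ δ'.1 → U δ' ⊆ U δ := fun δ δ' h =>
    connectedComponentIn_mono _ (compl_subset_compl.2 (Metric.closedBall_subset_closedBall h))
  -- The union of the `U δ` is open and relatively closed in `{x}ᶜ`, hence exhausts it.
  have hcover : ({x}ᶜ : Set Y) ⊆ ⋃ δ, U δ := by
    refine (hcut x).subset_of_closure_inter_subset (isOpen_iUnion hUo) ⟨c, hcx, ?_⟩ ?_
    · have hd : 0 < dist c x := dist_pos.2 hcx
      refine mem_iUnion.2 ⟨⟨dist c x / 2, by positivity⟩, mem_connectedComponentIn ?_⟩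
      simp only [mem_compl_iff, Metric.mem_closedBall, not_le]
      linarith
    · rintro y ⟨hy, hyx⟩
      have hd : 0 < dist y x := dist_pos.2 hyx
      have hyr : y ∈ (Metric.closedBall x (dist y x / 2))ᶜ := by
        simp only [mem_compl_iff, Metric.mem_closedBall, not_le]
        linarith
      obtain ⟨z, hzN, hzU⟩ := mem_closure_iff.1 hy _
        (Metric.isClosed_closedBall.isOpen_compl.connectedComponentIn)
        (mem_connectedComponentIn hyr)
      obtain ⟨δ, hzδ⟩ := mem_iUnion.1 hzU
      -- Below both radii, `y` and `c` both lie in the component of `z`.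
      refine mem_iUnion.2 ⟨⟨min δ.1 (dist y x / 2), lt_min δ.2 (by positivity)⟩, ?_⟩
      have h1 := hUmono ⟨min δ.1 (dist y x / 2), lt_min δ.2 (by positivity)⟩ δ
        (min_le_left _ _) hzδ
      have h2 := connectedComponentIn_mono y (compl_subset_compl.2
        (Metric.closedBall_subset_closedBall (x := x)
          (min_le_right δ.1 (dist y x / 2)))) hzN
      have h3 := (connectedComponentIn_eq h1).trans (connectedComponentIn_eq h2).symm
      change y ∈ connectedComponentIn _ c
      rw [h3]
      exact mem_connectedComponentIn (compl_subset_compl.2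
        (Metric.closedBall_subset_closedBall (min_le_right _ _)) hyr)
  have : Nonempty {δ : ℝ // 0 < δ} := ⟨⟨1, one_pos⟩⟩
  obtain ⟨δ, hδ⟩ := (Metric.isOpen_ball (x := x) (ε := ε)).isClosed_compl.isCompact
    |>.elim_directed_cover U hUo
      (fun y hy => hcover fun h => hy (by rw [mem_singleton_iff.1 h]; exact Metric.mem_ball_self hε))
      (fun a b => ⟨⟨min a.1 b.1, lt_min a.2 b.2⟩, hUmono _ _ (min_le_left _ _),
        hUmono _ _ (min_le_right _ _)⟩)
  exact ⟨δ.1, δ.2, c, hδ.trans (connectedComponentIn_mono c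
    (compl_subset_compl.2 Metric.ball_subset_closedBall))⟩
end

section
/- Let (G, 𝓐) be a local convergence pairing on a Peano continuum X without cut points, and suppose B, A_1, …, A_m ∈ 𝓐 is a crossing sequence. Let (f_i) ⊆ G with f_i(B) = B for all i act as a convergence sequence on B with attractor p and repeller n. If for all 1 ≤ j ≤ m we have n ∉ A_j and f_i^{-1}(p) ∉ A_j for all i, then f_i(A_j) → p for all 1 ≤ j ≤ m, meaning: for every open neighborhood U of p, f_i(A_j) ⊆ U for all sufficiently large i. -/
/-!
The heart of the proof is a uniform non-separation property of null families
(`exists_connected_nhds`): an open neighborhood `U` of `p` contains a connected open neighborhood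
`W` of `p` that is disjoint from every `S ∈ 𝓐` with `p ∉ S` and `S ⊄ U`. Members of small diameter
that leave `U` stay away from `p`, and the finitely many remaining ones are closed and miss `p`.
In particular, no such `S` separates two points of `W`.

Apply this to `S = f_i(A_j)`, which misses `p` by hypothesis. If `f_i(A_j) ⊄ U`, then `f_i(A_j)`
neither meets `W` nor separates two points of `W`; hence `A_j` contains no point, and separates no
two points, that `f_i` maps into `W`. If `f_i(A_j) → p`, this rules out `f_i(A_{j+1}) ⊄ U` for
large `i`, whichever way `A_j` and `A_{j+1}` cross, and gives the induction step.

For `A_1`, a common point of `B` and `A_1` is different from `n`, so `f_i` maps it into `W`. If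
instead `A_1` separates `B`, let `V` be the component of `n` in the complement of `A_1`. Some
`y ∈ B` lies outside `V`, and some `x ≠ n` lies in `B ∩ V`, because `n` is not isolated in `B`
(`repeller_not_isolated`, which uses `|B| > 2`). Both `f_i(x)` and `f_i(y)` are eventually in `W`,
although `A_1` separates `x` and `y`.
-/

open Set Filter Topology Pointwise

/-- A null family of closed sets cannot separate points arbitrarily near `p` by members that avoid
`p` and leave a fixed neighborhood of `p`. -/
lemma exists_connected_nhds {X : Type*} [MetricSpace X] [CompactSpace X]
    [LocallyConnectedSpace X] {𝓐 : Set (Set X)} (hcl : ∀ S ∈ 𝓐, IsClosed S) (hnull : NullFam 𝓐)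
    {p : X} {U : Set X} (hU : IsOpen U) (hpU : p ∈ U) :
    ∃ W : Set X, IsOpen W ∧ IsPreconnected W ∧ p ∈ W ∧
      ∀ S ∈ 𝓐, p ∉ S → ¬ S ⊆ U → ∀ x ∈ W, x ∉ S := by
  obtain ⟨r, hr, hrU⟩ := Metric.isOpen_iff.1 hU p hpU
  have hfin : {S ∈ 𝓐 | r / 2 < Metric.diam S ∧ p ∉ S}.Finite :=
    (hnull (r / 2) (by positivity)).subset fun S hS => ⟨hS.1, hS.2.1⟩
  let O : Set X := Metric.ball p (r / 2) ∩ ⋂ S ∈ {S ∈ 𝓐 | r / 2 < Metric.diam S ∧ p ∉ S}, Sᶜ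
  have hO : IsOpen O :=
    Metric.isOpen_ball.inter (hfin.isOpen_biInter fun S hS => (hcl S hS.1).isOpen_compl)
  have hpO : p ∈ O :=
    ⟨Metric.mem_ball_self (by positivity), mem_iInter₂.2 fun S hS => hS.2.2⟩
  refine ⟨connectedComponentIn O p, hO.connectedComponentIn, isPreconnected_connectedComponentIn,
    mem_connectedComponentIn hpO, fun S hS hpS hSU x hx hxS => ?_⟩
  have hxO := connectedComponentIn_subset O p hx
  by_cases hd : r / 2 < Metric.diam S
  · exact mem_iInter₂.1 hxO.2 S ⟨hS, hd, hpS⟩ hxS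
  · apply hSU
    intro y hy
    apply hrU
    have h1 : dist y x ≤ Metric.diam S :=
      Metric.dist_le_diam_of_mem (isCompact_univ.isBounded.subset (subset_univ S)) hy hxS
    have h2 : dist x p < r / 2 := hxO.1
    have h3 := dist_triangle y x p
    rw [Metric.mem_ball]
    linarith

/-- If a translate of `S` misses a connected set containing the translates of `x` and `y`, then
`S` does not separate `x` and `y`. -/
lemma component_eq_of_smul_mem {G X : Type*} [Group G] [MulAction G X] [TopologicalSpace X]
    [ContinuousConstSMul G X] {g : G} {S W : Set X} (hW : IsPreconnected W)
    (hWS : ∀ z ∈ W, z ∉ g • S) {x y : X} (hx : g • x ∈ W) (hy : g • y ∈ W) :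
    connectedComponentIn Sᶜ x = connectedComponentIn Sᶜ y := by
  have hpre : IsPreconnected (g⁻¹ • W) := by
    rw [← image_smul]
    exact hW.image _ (continuous_const_smul _).continuousOn
  have hsub : g⁻¹ • W ⊆ Sᶜ := fun z hz hzS =>
    hWS (g • z) (mem_inv_smul_set_iff.1 hz) (smul_mem_smul_set hzS)
  exact connectedComponentIn_eq
    (hpre.subset_connectedComponentIn (mem_inv_smul_set_iff.2 hx) hsub
      (mem_inv_smul_set_iff.2 hy))

/-- The repeller is not isolated in `B`. Otherwise `B \ {n}` is compact, so `f_i` eventually maps it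
into a neighborhood of `p` missing two chosen points of `B \ {p}`; both would then be `f_i(n)`. -/
lemma repeller_not_isolated {G X : Type*} [Group G] [MulAction G X] [MetricSpace X]
    [CompactSpace X] {B : Set X} (hBc : IsClosed B) (hbig : 2 < B.encard) {f : ℕ → G}
    (hfB : ∀ i, f i • B = B) {n p : X} (hconv : ConvSeqOn B (fun i (x : X) => f i • x) n p)
    {V : Set X} (hV : IsOpen V) (hnV : n ∈ V) : ∃ x ∈ B ∩ V, x ≠ n := by
  by_contra! hiso
  have hcard : 1 < (B \ {p}).encard := by
    by_contra! hle
    have := encard_le_encard_sdiff_add_encard B {p}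
    rw [encard_singleton] at this
    have h2 : B.encard ≤ 1 + 1 := this.trans (by gcongr)
    rw [one_add_one_eq_two] at h2
    exact absurd h2 (not_le.2 hbig)
  obtain ⟨a, b, ha, hb, hab⟩ := one_lt_encard_iff.1 hcard
  have hev := hconv.2.2 (B \ V) sdiff_subset (hBc.sdiff hV).isCompact (fun hh => hh.2 hnV)
    ({a, b}ᶜ) (toFinite {a, b}).isClosed.isOpen_compl (by
      rintro (rfl | rfl)
      · exact ha.2 rfl
      · exact hb.2 rfl)
  obtain ⟨i, hi⟩ := hev.exists
  have key : ∀ c ∈ B, c ∈ ({a, b} : Set X) → (f i)⁻¹ • c = n := by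
    intro c hc hcab
    have hcB : (f i)⁻¹ • c ∈ B := by
      rw [← mem_smul_set_iff_inv_smul_mem, hfB i]
      exact hc
    by_contra hne
    have hcV : (f i)⁻¹ • c ∉ V := fun hh => hne (hiso _ ⟨hcB, hh⟩)
    have := hi (mem_image_of_mem _ ⟨hcB, hcV⟩)
    simp only [smul_inv_smul] at this
    exact this hcab
  exact hab (MulAction.injective (f i)⁻¹
    ((key a ha.1 (by simp)).trans (key b hb.1 (by simp)).symm))

/-- Lemma: if `B, A_1, …, A_m` is a crossing sequence, `(f_i)` stabilizes `B` and acts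
as a convergence sequence on `B` with attractor `p` and repeller `n`, and each `A_j`
avoids `n` and all `f_i⁻¹(p)`, then `f_i(A_j) → p` for all `j`. -/
theorem crossing_sequence_attracted {G X : Type*} [Group G] [MulAction G X]
    [MetricSpace X] [CompactSpace X] [ConnectedSpace X] [LocallyConnectedSpace X]
    [ContinuousConstSMul G X]
    (hcut : ∀ x : X, IsPreconnected ({x}ᶜ : Set X))
    (𝓐 : Set (Set X)) (h : IsLocalConvPairing G 𝓐)
    (B : Set X) (hB : B ∈ 𝓐) (m : ℕ) (hm : 1 ≤ m) (A : ℕ → Set X)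
    (hA : ∀ j, 1 ≤ j → j ≤ m → A j ∈ 𝓐)
    (hBA1 : Crosses B (A 1))
    (hchain : ∀ j, 1 ≤ j → j < m → Crosses (A j) (A (j + 1)))
    (f : ℕ → G) (hfB : ∀ i, f i • B = B) (n p : X)
    (hconv : ConvSeqOn B (fun i (x : X) => f i • x) n p)
    (hn : ∀ j, 1 ≤ j → j ≤ m → n ∉ A j)
    (hp : ∀ j, 1 ≤ j → j ≤ m → ∀ i, (f i)⁻¹ • p ∉ A j) :
    ∀ j, 1 ≤ j → j ≤ m → ∀ U : Set X, IsOpen U → p ∈ U →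
      ∀ᶠ i in atTop, f i • A j ⊆ U := by
  intro j hj
  induction j, hj using Nat.le_induction with
  | base =>
    intro h1 U hU hpU
    obtain ⟨W, hWo, hWc, hpW, hW⟩ := exists_connected_nhds h.closed h.null hU hpU
    -- Any `x ∈ B` other than the repeller is eventually mapped into `W`.
    have hpt : ∀ x ∈ B, x ≠ n → ∀ᶠ i in atTop, f i • x ∈ W := by
      intro x hx hxn
      filter_upwards [hconv.2.2 {x} (by simpa using hx) isCompact_singleton
        (by simpa using hxn.symm) W hWo hpW] with i hi
      exact hi (mem_image_of_mem _ (mem_singleton x))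
    have hmiss : ∀ i, ¬ f i • A 1 ⊆ U → ∀ z ∈ W, z ∉ f i • A 1 := fun i hi =>
      hW _ (h.invariant _ _ (hA 1 le_rfl h1))
        (fun hh => hp 1 le_rfl h1 i (mem_smul_set_iff_inv_smul_mem.1 hh)) hi
    rcases hBA1 with ⟨x, hxB, hxA⟩ | ⟨_, hsep⟩
    · have hxn : x ≠ n := fun e => hn 1 le_rfl h1 (e ▸ hxA)
      filter_upwards [hpt x hxB hxn] with i hi
      by_contra hc
      exact hmiss i hc _ hi (smul_mem_smul_set hxA)
    · obtain ⟨hBsub, u, hu, v, hv, huv⟩ := hsep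
      have hnA : n ∈ (A 1)ᶜ := hn 1 le_rfl h1
      obtain ⟨x, ⟨hxB, hxV⟩, hxn⟩ := repeller_not_isolated (h.closed B hB) (h.big B hB) hfB hconv
        (h.closed _ (hA 1 le_rfl h1)).isOpen_compl.connectedComponentIn
        (mem_connectedComponentIn hnA)
      have hxeq := connectedComponentIn_eq hxV
      obtain ⟨y, hyB, hy⟩ : ∃ y ∈ B,
          connectedComponentIn (A 1)ᶜ n ≠ connectedComponentIn (A 1)ᶜ y := by
        by_contra! hall
        exact huv ((hall u hu).symm.trans (hall v hv))
      have hyn : y ≠ n := fun e => hy (by rw [e])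
      filter_upwards [hpt x hxB hxn, hpt y hyB hyn] with i hxi hyi
      by_contra hc
      exact hy (hxeq.trans (component_eq_of_smul_mem hWc (hmiss i hc) hxi hyi))
  | succ j hj ih =>
    intro hjm U hU hpU
    obtain ⟨W, hWo, hWc, hpW, hW⟩ := exists_connected_nhds h.closed h.null hU hpU
    filter_upwards [ih (by omega) W hWo hpW] with i hi
    by_contra hc
    have hmiss := hW _ (h.invariant (f i) _ (hA (j + 1) (by omega) hjm))
      (fun hh => hp (j + 1) (by omega) hjm i (mem_smul_set_iff_inv_smul_mem.1 hh)) hc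
    rcases hchain j hj (by omega) with ⟨x, hx, hx'⟩ | ⟨_, _, x, hx, y, hy, hxy⟩
    · exact hmiss _ (hi (smul_mem_smul_set hx)) (smul_mem_smul_set hx')
    · exact hxy (component_eq_of_smul_mem hWc hmiss (hi (smul_mem_smul_set hx))
        (hi (smul_mem_smul_set hy)))
end
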